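/- Let n ≥ 2 and let U be an open subset of ℝⁿ that is star-shaped about one of its points. Let F be a smooth antisymmetric 2-tensor field on U (F_{ij} = −F_{ji}) that is closed, i.e. ∂_k F_{ij} + ∂_i F_{jk} + ∂_j F_{ki} = 0 on U for all i, j, k. Then there exists a smooth vector field A : U → ℝⁿ with F_{ij} = ∂_i A_j − ∂_j A_i on U for all i, j, and with vanishing divergence Σ_i ∂_i A_i = 0 on U. (Strong Poincaré lemma for 2-forms: closed 2-tensor fields have divergence-free potentials, i.e. the Coulomb/Lorenz gauge is always attainable locally.) -/

import Mathlib

/-!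
The radial homotopy operator of the classical Poincaré lemma gives a smooth potential `A₀` of `F` on
`U` (`exists_potential`). Adding a gradient `∇u` does not change the curl, and it changes the
divergence by `Δu`, so it remains to solve Poisson's equation `Δu = - div A₀` on `U`, with no control
on the right-hand side at the boundary of `U` (`poisson`).

For compactly supported smooth data the Newtonian potential is a solution. The Newtonian kernel is
handled through its radial regularisations `prof n (‖x‖ ^ 2 + a)`, whose Laplacians are explicit and
form an approximate identity as `a → 0` (`fundamental`, `conv_ker_lap`).

For general data `U` is exhausted by compact sets `K m`, star-shaped about `c`. Cutting the data off
gives a solution near each `K m`; two of them differ by a function harmonic near the smaller compact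
set, and subtracting from the later one a function, harmonic on a large ball, that is close to this
difference on `K m` makes the sequence converge locally uniformly. The limit is a solution because
locally uniform limits of harmonic functions are harmonic (`harmOn_of_tendstoUniformlyOn`), which
follows from a local reproducing formula by a smooth compactly supported kernel.

The approximation is Runge's theorem for star-shaped compact `K` (`runge`), proved by duality. Let a
functional on `C(K)` kill the functions harmonic on a ball about `c`. It kills the Newtonian kernels
with poles off that ball. When a pole `y ∉ K` moves away from `c` along its ray it never meets `K`,
and the kernel is a real-analytic function of the position with values in `C(K)`, so by the identity
theorem the functional kills all kernels with poles off `K` (`pole_pushing`). A function harmonic near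
`K` is on `K` a superposition of such kernels, and is therefore killed as well (`eq_zero_of_kerOn`);
by Hahn–Banach it lies in the closure of the functions harmonic on the ball.
-/

/-- Partial derivative of `f` at `x` in direction `v`. -/
noncomputable def pd {E F : Type*} [NormedAddCommGroup E] [NormedSpace ℝ E]
    [NormedAddCommGroup F] [NormedSpace ℝ F] (f : E → F) (v : E) (x : E) : F :=
  fderiv ℝ f x v

namespace StrongPoincare

open Set Filter Topology MeasureTheory
open scoped ContDiff

/-! ### Calculus with partial derivatives -/

/-- Euclidean `n`-space. -/
abbrev Eu (n : ℕ) : Type := EuclideanSpace ℝ (Fin n)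

/-- The `i`-th standard basis vector. -/
noncomputable abbrev e {n : ℕ} (i : Fin n) : Eu n := EuclideanSpace.single i 1

/-- The Laplacian, as the sum of the unmixed second partial derivatives. -/
noncomputable def lap {n : ℕ} (f : Eu n → ℝ) (x : Eu n) : ℝ :=
  ∑ i : Fin n, pd (pd f (e i)) (e i) x

/-- `u` is smooth and harmonic on (the open set) `V`. -/
def HarmOn {n : ℕ} (u : Eu n → ℝ) (V : Set (Eu n)) : Prop :=
  ContDiffOn ℝ ∞ u V ∧ ∀ x ∈ V, lap u x = 0

section Calculus

variable {n : ℕ} {f g : Eu n → ℝ} {V : Set (Eu n)} {x v : Eu n}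

lemma pd_contDiffOn (hV : IsOpen V) (hf : ContDiffOn ℝ ∞ f V) (v : Eu n) :
    ContDiffOn ℝ ∞ (pd f v) V :=
  (hf.fderiv_of_isOpen hV (m := ∞) (by norm_cast)).clm_apply contDiffOn_const

lemma pd_contDiff (hf : ContDiff ℝ ∞ f) (v : Eu n) : ContDiff ℝ ∞ (pd f v) :=
  contDiffOn_univ.1 (pd_contDiffOn isOpen_univ hf.contDiffOn v)

lemma pd_congr (h : f =ᶠ[𝓝 x] g) (v : Eu n) : pd f v =ᶠ[𝓝 x] pd g v :=
  (h.fderiv (𝕜 := ℝ)).mono fun y hy => by simp only [pd, hy]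

lemma lap_congr (h : f =ᶠ[𝓝 x] g) : lap f x = lap g x :=
  Finset.sum_congr rfl fun _ _ => (pd_congr (pd_congr h _) _).eq_of_nhds

lemma lap_contDiffOn (hV : IsOpen V) (hf : ContDiffOn ℝ ∞ f V) : ContDiffOn ℝ ∞ (lap f) V :=
  ContDiffOn.sum fun _ _ => pd_contDiffOn hV (pd_contDiffOn hV hf _) _

lemma lap_contDiff (hf : ContDiff ℝ ∞ f) : ContDiff ℝ ∞ (lap f) :=
  contDiffOn_univ.1 (lap_contDiffOn isOpen_univ hf.contDiffOn)

lemma diffAt (hV : IsOpen V) (hf : ContDiffOn ℝ ∞ f V) (hx : x ∈ V) : DifferentiableAt ℝ f x :=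
  (hf.contDiffAt (hV.mem_nhds hx)).differentiableAt (by norm_cast)

lemma pd_add (hf : DifferentiableAt ℝ f x) (hg : DifferentiableAt ℝ g x) :
    pd (fun y => f y + g y) v x = pd f v x + pd g v x := by
  simp only [pd, fderiv_fun_add hf hg, add_apply]

lemma pd_const_mul (hf : DifferentiableAt ℝ f x) (a : ℝ) :
    pd (fun y => a * f y) v x = a * pd f v x := by
  simp only [pd, fderiv_const_mul hf a, smul_apply, smul_eq_mul]

/-- The Laplacian is linear on functions that are smooth on an open set. -/
lemma lap_lin (hV : IsOpen V) (hf : ContDiffOn ℝ ∞ f V) (hg : ContDiffOn ℝ ∞ g V) (hx : x ∈ V)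
    (a b : ℝ) : lap (fun y => a * f y + b * g y) x = a * lap f x + b * lap g x := by
  have key : ∀ {f g : Eu n → ℝ}, ContDiffOn ℝ ∞ f V → ContDiffOn ℝ ∞ g V → ∀ y ∈ V, ∀ v,
      pd (fun y => a * f y + b * g y) v y = a * pd f v y + b * pd g v y := by
    intro f g hf hg y hy v
    rw [pd_add ((diffAt hV hf hy).const_mul a) ((diffAt hV hg hy).const_mul b),
      pd_const_mul (diffAt hV hf hy), pd_const_mul (diffAt hV hg hy)]
  simp only [lap, Finset.mul_sum, ← Finset.sum_add_distrib]
  refine Finset.sum_congr rfl fun i _ => ?_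
  rw [← key (pd_contDiffOn hV hf _) (pd_contDiffOn hV hg _) x hx]
  refine (pd_congr ?_ _).eq_of_nhds
  filter_upwards [hV.mem_nhds hx] with y hy using key hf hg y hy _

lemma lap_sub (hV : IsOpen V) (hf : ContDiffOn ℝ ∞ f V) (hg : ContDiffOn ℝ ∞ g V) (hx : x ∈ V) :
    lap (fun y => f y - g y) x = lap f x - lap g x := by
  have := lap_lin hV hf hg hx 1 (-1)
  simpa [sub_eq_add_neg] using this

lemma HarmOn.mono {u : Eu n → ℝ} {W : Set (Eu n)} (h : HarmOn u V) (hW : W ⊆ V) : HarmOn u W :=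
  ⟨h.1.mono hW, fun x hx => h.2 x (hW hx)⟩

lemma hasCompactSupport_pd (hf : HasCompactSupport f) (v : Eu n) : HasCompactSupport (pd f v) :=
  hf.fderiv_apply (𝕜 := ℝ) v

lemma hasCompactSupport_lap (hf : HasCompactSupport f) : HasCompactSupport (lap f) := by
  have h : ∀ s : Finset (Fin n),
      HasCompactSupport (fun x => ∑ i ∈ s, pd (pd f (e i)) (e i) x) := by
    intro s
    induction s using Finset.cons_induction with
    | empty => exact (HasCompactSupport.zero : HasCompactSupport (0 : Eu n → ℝ))
    | cons a s ha ih =>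
      simp only [Finset.sum_cons]
      exact (hasCompactSupport_pd (hasCompactSupport_pd hf _) _).add ih
  exact h _

/-- The product of a smooth function on `V` with a smooth cutoff supported in `V` is smooth on the
whole space, whatever values the function takes outside `V`. -/
lemma contDiff_cutoff {χ : Eu n → ℝ} (hV : IsOpen V) (hχ : ContDiff ℝ ∞ χ) (hs : tsupport χ ⊆ V)
    (hf : ContDiffOn ℝ ∞ f V) : ContDiff ℝ ∞ (fun x => χ x * f x) := by
  refine contDiff_iff_contDiffAt.2 fun x => ?_
  by_cases hx : x ∈ tsupport χ
  · exact hχ.contDiffAt.mul (hf.contDiffAt (hV.mem_nhds (hs hx)))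
  · refine (contDiffAt_const (c := (0 : ℝ))).congr_of_eventuallyEq ?_
    filter_upwards [(isClosed_tsupport χ).isOpen_compl.mem_nhds hx] with y hy
    rw [image_eq_zero_of_notMem_tsupport hy, zero_mul]

lemma continuous_cutoff {χ : Eu n → ℝ} (hV : IsOpen V) (hχ : Continuous χ) (hs : tsupport χ ⊆ V)
    (hf : ContinuousOn f V) : Continuous (fun x => χ x * f x) := by
  refine continuous_of_tsupport fun x hx => ?_
  have hxV : x ∈ V := hs (tsupport_mul_subset_left hx)
  exact hχ.continuousAt.mul (hf.continuousAt (hV.mem_nhds hxV))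

lemma exists_cutoff {K : Set (Eu n)} (hK : IsCompact K) (hV : IsOpen V) (hKV : K ⊆ V) :
    ∃ χ : Eu n → ℝ, ContDiff ℝ ∞ χ ∧ HasCompactSupport χ ∧ tsupport χ ⊆ V ∧
      ∃ W, IsOpen W ∧ K ⊆ W ∧ W ⊆ V ∧ ∀ x ∈ W, χ x = 1 := by
  obtain ⟨L, hL, hKL, hLV⟩ := exists_compact_between hK hV hKV
  obtain ⟨f, h1, h0, -⟩ := exists_contMDiffMap_one_nhds_of_subset_interior (n := (⊤ : ℕ∞))
    (modelWithCornersSelf ℝ (Eu n)) hK.isClosed hKL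
  obtain ⟨W, hWo, hKW, hW⟩ := mem_nhdsSet_iff_exists.1 h1
  have hsupp : Function.support f ⊆ L := fun x hx => by_contra fun h => hx (h0 x h)
  have hts : tsupport f ⊆ L := closure_minimal hsupp hL.isClosed
  refine ⟨f, f.contMDiff.contDiff, hL.of_isClosed_subset (isClosed_tsupport _) hts,
    hts.trans hLV, W, hWo, hKW, fun x hx => hLV (hsupp ?_), fun x hx => hW hx⟩
  have : f x = 1 := hW hx
  simp [this]

end Calculus

/-! ### Convolutions, Green's identity and radial kernels -/

section Convolution

variable {n : ℕ} {H η f g : Eu n → ℝ}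

/-- The convolution of two real functions. -/
noncomputable def conv (H η : Eu n → ℝ) (x : Eu n) : ℝ := ∫ y, H y * η (x - y)

lemma conv_eq : conv H η = convolution H η (ContinuousLinearMap.mul ℝ ℝ) volume := rfl

lemma conv_comm (x : Eu n) : conv H η x = conv η H x := by
  rw [conv, ← integral_sub_left_eq_self _ _ x]
  simp only [sub_sub_cancel, mul_comm, conv]

lemma conv_contDiff (hH : LocallyIntegrable H) (hη : ContDiff ℝ ∞ η) (hc : HasCompactSupport η) :
    ContDiff ℝ ∞ (conv H η) :=
  hc.contDiff_convolution_right (n := (⊤ : ℕ∞)) (ContinuousLinearMap.mul ℝ ℝ) hH hη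

lemma pd_conv (hH : LocallyIntegrable H) (hη : ContDiff ℝ ∞ η) (hc : HasCompactSupport η)
    (v : Eu n) : pd (conv H η) v = conv H (pd η v) := by
  ext x
  have := hc.hasFDerivAt_convolution_right (ContinuousLinearMap.mul ℝ ℝ) hH
    (hη.of_le (by norm_cast)) x
  rw [pd, conv_eq, this.fderiv, convolution_precompR_apply _ hH (hc.fderiv (𝕜 := ℝ))
    (hη.continuous_fderiv (by norm_cast))]
  rfl

lemma integrable_conv (hH : LocallyIntegrable H) (hη : Continuous η) (hc : HasCompactSupport η)
    (x : Eu n) : Integrable (fun y => H y * η (x - y)) :=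
  hc.convolutionExists_right (ContinuousLinearMap.mul ℝ ℝ) hH hη x

lemma lap_conv (hH : LocallyIntegrable H) (hη : ContDiff ℝ ∞ η) (hc : HasCompactSupport η) :
    lap (conv H η) = conv H (lap η) := by
  ext x
  have h : ∀ i : Fin n, pd (pd (conv H η) (e i)) (e i) x = conv H (pd (pd η (e i)) (e i)) x := by
    intro i
    rw [pd_conv hH hη hc, pd_conv hH (pd_contDiff hη _) (hasCompactSupport_pd hc _)]
  simp only [lap, h, conv, Finset.mul_sum]
  rw [integral_finsetSum]
  exact fun i _ => integrable_conv hH (pd_contDiff (pd_contDiff hη _) _).continuous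
    (hasCompactSupport_pd (hasCompactSupport_pd hc _) _) x

lemma ibp_pd (hf : ContDiff ℝ ∞ f) (hg : ContDiff ℝ ∞ g) (hc : HasCompactSupport g) (v : Eu n) :
    ∫ x, f x * pd g v x = - ∫ x, pd f v x * g x := by
  have hf' := (pd_contDiff hf v).continuous
  have hg' := (pd_contDiff hg v).continuous
  refine integral_mul_fderiv_eq_neg_fderiv_mul_of_integrable ?_ ?_ ?_
    (fun x _ => (hf.differentiable (by norm_cast)) x)
    (fun x _ => (hg.differentiable (by norm_cast)) x)
  · exact (hf'.mul hg.continuous).integrable_of_hasCompactSupport hc.mul_left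
  · exact (hf.continuous.mul hg').integrable_of_hasCompactSupport
      (hasCompactSupport_pd hc v).mul_left
  · exact (hf.continuous.mul hg.continuous).integrable_of_hasCompactSupport hc.mul_left

/-- Green's second identity without boundary terms. -/
lemma integral_mul_lap (hf : ContDiff ℝ ∞ f) (hg : ContDiff ℝ ∞ g) (hc : HasCompactSupport g) :
    ∫ x, f x * lap g x = ∫ x, lap f x * g x := by
  simp only [lap, Finset.mul_sum, Finset.sum_mul]
  rw [integral_finsetSum, integral_finsetSum]
  · refine Finset.sum_congr rfl fun i _ => ?_
    rw [ibp_pd hf (pd_contDiff hg _) (hasCompactSupport_pd hc _), ibp_pd (pd_contDiff hf _) hg hc,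
      neg_neg]
  · exact fun i _ => ((pd_contDiff (pd_contDiff hf _) _).continuous.mul
      hg.continuous).integrable_of_hasCompactSupport hc.mul_left
  · exact fun i _ => (hf.continuous.mul (pd_contDiff (pd_contDiff hg _) _).continuous
      ).integrable_of_hasCompactSupport
      (hasCompactSupport_pd (hasCompactSupport_pd hc _) _).mul_left

lemma pd_comp_sub (hf : Differentiable ℝ f) (x v : Eu n) :
    pd (fun y => f (x - y)) v = fun y => - pd f v (x - y) := by
  ext y
  have h1 : HasFDerivAt (fun y => x - y) (-ContinuousLinearMap.id ℝ (Eu n)) y := by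
    simpa using (hasFDerivAt_id y).const_sub x
  have := (hf (x - y)).hasFDerivAt.comp y h1
  simp only [pd]
  rw [show (fun y => f (x - y)) = f ∘ (fun y => x - y) from rfl, this.fderiv]
  simp

/-- The Laplacian commutes with `y ↦ x - y`. -/
lemma lap_comp_sub (hf : ContDiff ℝ ∞ f) (x y : Eu n) :
    lap (fun y => f (x - y)) y = lap f (x - y) := by
  have hd : ∀ {f : Eu n → ℝ}, ContDiff ℝ ∞ f → Differentiable ℝ f :=
    fun h => h.differentiable (by norm_cast)
  refine Finset.sum_congr rfl fun i _ => ?_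
  rw [pd_comp_sub (hd hf)]
  have h2 := pd_comp_sub (hd (pd_contDiff hf (e i))) x (e i)
  have h3 : pd (fun y => - pd f (e i) (x - y)) (e i) y
      = - pd (fun y => pd f (e i) (x - y)) (e i) y := by
    simp only [pd, fderiv_fun_neg, neg_apply]
  rw [h3, h2, neg_neg]

end Convolution

section Fundamental

/-- The radial profile of the Newtonian kernel, as a function of the squared distance: the
primitive `log s` or `s ^ (1 - n/2) / (1 - n/2)` of `s ^ (-n/2)`. -/
noncomputable def prof (n : ℕ) (s : ℝ) : ℝ :=
  if n = 2 then Real.log s else s ^ (1 - (n : ℝ) / 2) / (1 - (n : ℝ) / 2)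

variable {n : ℕ}

lemma hasDerivAt_prof {s : ℝ} (hs : 0 < s) :
    HasDerivAt (prof n) (s ^ (-((n : ℝ) / 2))) s := by
  by_cases h : n = 2
  · subst h
    have : prof 2 = Real.log := by ext; simp [prof]
    rw [this]
    convert Real.hasDerivAt_log hs.ne' using 1
    norm_num [Real.rpow_neg_one]
  · have h' : (1 - (n : ℝ) / 2) ≠ 0 := by
      intro h0
      apply h
      have : (n : ℝ) = 2 := by linarith
      exact_mod_cast this
    have : prof n = fun s => s ^ (1 - (n : ℝ) / 2) / (1 - (n : ℝ) / 2) := by ext; simp [prof, h]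
    rw [this]
    refine ((Real.hasDerivAt_rpow_const (p := 1 - (n : ℝ) / 2) (Or.inl hs.ne')).div_const
      (1 - (n : ℝ) / 2)).congr_deriv ?_
    rw [mul_div_cancel_left₀ _ h']
    congr 1
    ring

lemma contDiffAt_prof {s : ℝ} (hs : 0 < s) : ContDiffAt ℝ ∞ (prof n) s := by
  unfold prof
  split_ifs
  · exact Real.contDiffAt_log.2 hs.ne'
  · exact (Real.contDiffAt_rpow_const_of_ne hs.ne').div_const _

lemma prof_mono {s t : ℝ} (hs : 0 < s) (hst : s ≤ t) : prof n s ≤ prof n t := by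
  have : MonotoneOn (prof n) (Ioi 0) := by
    refine monotoneOn_of_deriv_nonneg (convex_Ioi 0)
      (fun s hs => (hasDerivAt_prof hs).continuousAt.continuousWithinAt) ?_ ?_
    · rw [interior_Ioi]
      exact fun s hs => (hasDerivAt_prof hs).differentiableAt.differentiableWithinAt
    · rw [interior_Ioi]
      intro s hs
      rw [(hasDerivAt_prof hs).deriv]
      exact Real.rpow_nonneg (le_of_lt hs) _
  exact this hs (hs.trans_le hst) hst

/-- The regularised kernel `prof n (‖x‖² + a)`; for `a = 0` it is a constant multiple of the
Newtonian kernel. -/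
noncomputable def ker (n : ℕ) (a : ℝ) (x : Eu n) : ℝ := prof n (‖x‖ ^ 2 + a)

lemma contDiffAt_ker {a : ℝ} {x : Eu n} (h : 0 < ‖x‖ ^ 2 + a) : ContDiffAt ℝ ∞ (ker n a) x := by
  have h1 : ContDiffAt ℝ ∞ (fun x : Eu n => ‖x‖ ^ 2 + a) x :=
    ((contDiff_norm_sq ℝ).add contDiff_const).contDiffAt
  exact ContDiffAt.comp x (contDiffAt_prof h) h1

lemma hasFDerivAt_radial {P : ℝ → ℝ} {p a : ℝ} {x : Eu n} (h : HasDerivAt P p (‖x‖ ^ 2 + a)) :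
    HasFDerivAt (fun x : Eu n => P (‖x‖ ^ 2 + a)) (p • (2 • innerSL ℝ x)) x :=
  h.comp_hasFDerivAt x ((hasStrictFDerivAt_norm_sq x).hasFDerivAt.add_const a)

lemma pd_ker {a : ℝ} {x : Eu n} (h : 0 < ‖x‖ ^ 2 + a) (i : Fin n) :
    pd (ker n a) (e i) x = (‖x‖ ^ 2 + a) ^ (-((n : ℝ) / 2)) * (2 * x i) := by
  have := hasFDerivAt_radial (x := x) (hasDerivAt_prof (n := n) h)
  rw [pd, show ker n a = fun x => prof n (‖x‖ ^ 2 + a) from rfl, this.fderiv]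
  simp [EuclideanSpace.inner_single_right]

/-- The Laplacian of the regularised kernel; the factor `a` makes the kernel with `a = 0` harmonic off
the origin. -/
lemma lap_ker {a : ℝ} {x : Eu n} (h : 0 < ‖x‖ ^ 2 + a) :
    lap (ker n a) x = 2 * n * a * (‖x‖ ^ 2 + a) ^ (-((n : ℝ) / 2) - 1) := by
  have hopen : IsOpen {x : Eu n | 0 < ‖x‖ ^ 2 + a} :=
    isOpen_lt continuous_const (by fun_prop)
  have h2 : ∀ i : Fin n, pd (pd (ker n a) (e i)) (e i) x =
      (‖x‖ ^ 2 + a) ^ (-((n : ℝ) / 2)) * 2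
        - 2 * n * (‖x‖ ^ 2 + a) ^ (-((n : ℝ) / 2) - 1) * (x i) ^ 2 := by
    intro i
    have hloc : pd (ker n a) (e i) =ᶠ[𝓝 x]
        fun x => (‖x‖ ^ 2 + a) ^ (-((n : ℝ) / 2)) * (2 * x i) := by
      filter_upwards [hopen.mem_nhds h] with y hy using pd_ker hy i
    rw [(pd_congr hloc _).eq_of_nhds]
    have d1 := hasFDerivAt_radial (x := x) (a := a)
      (Real.hasDerivAt_rpow_const (p := -((n : ℝ) / 2)) (Or.inl h.ne'))
    have d2 : HasFDerivAt (fun x : Eu n => 2 * x i)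
        ((2 : ℝ) • (EuclideanSpace.proj i : Eu n →L[ℝ] ℝ)) x :=
      ((EuclideanSpace.proj i : Eu n →L[ℝ] ℝ).hasFDerivAt).const_mul 2
    rw [pd, (d1.fun_mul d2).fderiv]
    simp [EuclideanSpace.inner_single_right]
    ring
  have hn : ∑ i, (x i) ^ 2 = ‖x‖ ^ 2 := by rw [EuclideanSpace.real_norm_sq_eq]
  simp only [lap, h2]
  rw [Finset.sum_sub_distrib, ← Finset.mul_sum Finset.univ (fun i => x i ^ 2), hn]
  simp only [Finset.sum_const, Finset.card_univ, Fintype.card_fin, nsmul_eq_mul]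
  have h3 : (‖x‖ ^ 2 + a) ^ (-((n : ℝ) / 2)) =
      (‖x‖ ^ 2 + a) ^ (-((n : ℝ) / 2) - 1) * (‖x‖ ^ 2 + a) := by
    rw [Real.rpow_sub_one h.ne']; field_simp
  rw [h3]; ring

end Fundamental

/-! ### The Newtonian kernel as a fundamental solution -/

section Newtonian
variable {n : ℕ}

lemma measurable_ker (a : ℝ) : Measurable (ker n a) := by
  unfold ker prof
  split_ifs <;> fun_prop

/-- The Newtonian kernel is locally integrable: it grows like `‖x‖ ^ (2 - n)` at the origin, or
logarithmically when `n = 2`. -/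
lemma locallyIntegrable_ker (hn : 2 ≤ n) : LocallyIntegrable (ker n 0) := by
  have hfin : Module.finrank ℝ (Eu n) = n := by simp
  have hn' : (2 : ℝ) ≤ n := by exact_mod_cast hn
  have : Nontrivial (Eu n) := by
    apply Module.nontrivial_of_finrank_pos (R := ℝ); omega
  have hne : ∀ᵐ x : Eu n, x ≠ 0 := by
    simp [ae_iff]
  by_cases h : n = 2
  · have h1 : LocallyIntegrable (fun x : Eu n => ‖x‖ ^ (-(1 / 2) : ℝ)) := by
      refine locallyIntegrable_of_norm_le_rpow (C := 1) (α := 1 / 2) (by omega) ?_ ?_ ?_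
      · rw [hfin]; linarith
      · refine Eventually.of_forall fun x => ?_
        rw [Real.norm_of_nonneg (by positivity), one_mul]
      · exact (by fun_prop : Measurable fun x : Eu n => ‖x‖ ^ (-(1 / 2) : ℝ)).aestronglyMeasurable
    have h2 : LocallyIntegrable (fun x : Eu n => ‖x‖ ^ 2) :=
      Continuous.locallyIntegrable (by fun_prop)
    have h3 := (h1.smul (4 : ℝ)).add h2
    refine h3.mono (measurable_ker 0).aestronglyMeasurable ?_
    filter_upwards [hne] with x hx
    have hx' : 0 < ‖x‖ := norm_pos_iff.2 hx
    have e1 : ker n 0 x = Real.log (‖x‖ ^ 2) := by simp [ker, prof, h]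
    have e2 : Real.log (‖x‖ ^ 2) ≤ ‖x‖ ^ 2 := (Real.log_le_self (by positivity))
    -- `log s ≤ s ^ ε / ε` at `s = ‖x‖⁻¹` with `ε = 1 / 2`; any `ε < 2` gives a locally integrable
    -- bound in the plane
    have e3 : -Real.log (‖x‖ ^ 2) ≤ 4 * ‖x‖ ^ (-(1 / 2) : ℝ) := by
      have := Real.log_le_rpow_div (x := ‖x‖⁻¹) (by positivity) (ε := 1 / 2) (by norm_num)
      rw [Real.log_inv, Real.inv_rpow hx'.le, ← Real.rpow_neg hx'.le] at this
      rw [Real.log_pow]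
      push_cast
      linarith
    have p1 : 0 < ‖x‖ ^ (-(1 / 2) : ℝ) := by positivity
    have p2 : 0 < ‖x‖ ^ 2 := by positivity
    simp only [Pi.add_apply, Pi.smul_apply, smul_eq_mul]
    rw [e1, Real.norm_eq_abs, Real.norm_of_nonneg (by positivity), abs_le]
    constructor <;> linarith
  · refine locallyIntegrable_of_norm_le_rpow (C := |1 - (n : ℝ) / 2|⁻¹) (α := (n : ℝ) - 2)
      (by omega) ?_ ?_ (measurable_ker 0).aestronglyMeasurable
    · rw [hfin]; linarith
    · filter_upwards [hne] with x hx
      have hx' : 0 < ‖x‖ := norm_pos_iff.2 hx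
      have : (‖x‖ ^ 2) ^ (1 - (n : ℝ) / 2) = ‖x‖ ^ (-((n : ℝ) - 2)) := by
        rw [← Real.rpow_natCast, ← Real.rpow_mul hx'.le]; congr 1; push_cast; ring
      simp only [ker, prof, h, if_false, add_zero, this, norm_div, Real.norm_eq_abs]
      rw [abs_of_nonneg (by positivity), div_eq_inv_mul]

/-- The profile of the approximate identity given by the Laplacians of the regularised kernels. -/
noncomputable def rho (n : ℕ) (x : Eu n) : ℝ := (1 + ‖x‖ ^ 2) ^ (-((n : ℝ) / 2) - 1)

lemma integrable_rho : Integrable (rho n) := by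
  have := integrable_rpow_neg_one_add_norm_sq (E := Eu n) (μ := volume) (r := n + 2)
    (by simp)
  convert this using 2 with x
  rw [rho]; congr 1; ring

lemma rho_pos (x : Eu n) : 0 < rho n x := by unfold rho; positivity

lemma integral_rho_pos : 0 < ∫ x, rho n x := by
  refine (integral_pos_iff_support_of_nonneg (fun x => (rho_pos x).le) integrable_rho).2 ?_
  have : Function.support (rho n) = univ := eq_univ_of_forall fun x => (rho_pos x).ne'
  rw [this]; exact pos_iff_ne_zero.2 (NeZero.ne _)

/-- The constant by which `ker n 0` differs from a fundamental solution. -/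
noncomputable def kap (n : ℕ) : ℝ := 2 * n * ∫ x, rho n x

lemma kap_ne (hn : 2 ≤ n) : kap n ≠ 0 := by
  have : (0 : ℝ) < n := by exact_mod_cast (by omega : 0 < n)
  have := integral_rho_pos (n := n)
  unfold kap; positivity

/-- The Laplacians of the regularised kernels are, up to `2 * n`, rescalings of one profile. -/
lemma lap_ker_eq {c : ℝ} (hc : 0 < c) (x : Eu n) :
    lap (ker n ((c ^ 2)⁻¹)) x = 2 * n * (c ^ n * rho n (c • x)) := by
  have hp : 0 < ‖x‖ ^ 2 + (c ^ 2)⁻¹ := by positivity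
  rw [lap_ker hp, rho, norm_smul, Real.norm_of_nonneg hc.le]
  have h1 : 1 + (c * ‖x‖) ^ 2 = c ^ 2 * (‖x‖ ^ 2 + (c ^ 2)⁻¹) := by field_simp; ring
  have h2 : (c ^ 2) ^ (-((n : ℝ) / 2) - 1) = (c ^ n)⁻¹ * (c ^ 2)⁻¹ := by
    rw [← Real.rpow_natCast c 2, ← Real.rpow_natCast c n, ← Real.rpow_mul hc.le,
      ← Real.rpow_neg hc.le, ← Real.rpow_neg hc.le, ← Real.rpow_add hc]
    congr 1; push_cast; ring
  rw [h1, Real.mul_rpow (by positivity) hp.le, h2]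
  field_simp

/-- The decay at infinity required of the profile of an approximate identity. -/
lemma tendsto_rho : Tendsto (fun x : Eu n => ‖x‖ ^ n * ((∫ x, rho n x)⁻¹ * rho n x))
    (Bornology.cobounded (Eu n)) (𝓝 0) := by
  have hI := integral_rho_pos (n := n)
  have hle : ∀ x : Eu n, ‖x‖ ^ n * rho n x ≤ (1 + ‖x‖ ^ 2)⁻¹ := by
    intro x
    have e1 : ‖x‖ ^ n ≤ (1 + ‖x‖ ^ 2) ^ ((n : ℝ) / 2) := by
      have : ‖x‖ ^ n = (‖x‖ ^ 2) ^ ((n : ℝ) / 2) := by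
        rw [← Real.rpow_natCast, ← Real.rpow_natCast, ← Real.rpow_mul (norm_nonneg x)]
        congr 1; push_cast; ring
      rw [this]
      gcongr
      linarith
    calc ‖x‖ ^ n * rho n x ≤ (1 + ‖x‖ ^ 2) ^ ((n : ℝ) / 2) * rho n x := by
          gcongr; exact (rho_pos x).le
      _ = _ := by
          rw [rho, ← Real.rpow_add (by positivity), ← Real.rpow_neg_one]; congr 1; ring
  have hlim : Tendsto (fun x : Eu n => (∫ x, rho n x)⁻¹ * (1 + ‖x‖ ^ 2)⁻¹)
      (Bornology.cobounded (Eu n)) (𝓝 0) := by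
    have hsq : Tendsto (fun x : Eu n => ‖x‖ ^ 2) (Bornology.cobounded (Eu n)) atTop :=
      (tendsto_pow_atTop (α := ℝ) two_ne_zero).comp tendsto_norm_cobounded_atTop
    have hinv : Tendsto (fun x : Eu n => (1 + ‖x‖ ^ 2)⁻¹) (Bornology.cobounded (Eu n)) (𝓝 0) :=
      (tendsto_atTop_add_const_left _ (1 : ℝ) hsq).inv_tendsto_atTop
    simpa only [mul_zero] using hinv.const_mul (∫ x, rho n x)⁻¹
  refine squeeze_zero (fun x => ?_) (fun x => ?_) hlim
  · exact mul_nonneg (pow_nonneg (norm_nonneg x) _)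
      (mul_nonneg (inv_nonneg.2 hI.le) (rho_pos x).le)
  · rw [mul_left_comm]
    exact mul_le_mul_of_nonneg_left (hle x) (inv_nonneg.2 hI.le)

/-- The Laplacians of the smooth kernels `ker n (c⁻²)` form an approximate identity, up to the
factor `kap n`, as `c → ∞`. -/
lemma tendsto_integral_ker_mul_lap {φ : Eu n → ℝ} (hφ : ContDiff ℝ ∞ φ)
    (hc : HasCompactSupport φ) :
    Tendsto (fun c : ℝ => ∫ y, ker n ((c ^ 2)⁻¹) y * lap φ y) atTop (𝓝 (kap n * φ 0)) := by
  have hfin : Module.finrank ℝ (Eu n) = n := by simp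
  have hI := integral_rho_pos (n := n)
  have ksm : ∀ a : ℝ, 0 < a → ContDiff ℝ ∞ (ker n a) := fun a ha =>
    contDiff_iff_contDiffAt.2 fun x => contDiffAt_ker (by positivity)
  have hpk := tendsto_integral_comp_smul_smul_of_integrable (μ := (volume : Measure (Eu n)))
    (φ := fun x => (∫ x, rho n x)⁻¹ * rho n x)
    (fun x => mul_nonneg (inv_nonneg.2 hI.le) (rho_pos x).le)
    (by rw [integral_const_mul, inv_mul_cancel₀ hI.ne'])
    (by rw [hfin]; exact tendsto_rho) (g := φ)
    (hφ.continuous.integrable_of_hasCompactSupport hc) hφ.continuous.continuousAt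
  rw [hfin] at hpk
  refine (hpk.const_mul (kap n)).congr' ?_
  filter_upwards [eventually_gt_atTop 0] with c hc0
  rw [integral_mul_lap (ksm _ (by positivity)) hφ hc, ← integral_const_mul]
  refine integral_congr_ae (Eventually.of_forall fun y => ?_)
  simp only [lap_ker_eq hc0, kap, smul_eq_mul]
  field_simp

/-- `ker n 0` is, up to the factor `kap n`, a fundamental solution of the Laplacian. The smooth
kernels `ker n (c⁻²)` converge to it as `c → ∞`, dominated by `ker n 0` and `ker n 1` since `prof n`
is monotone. -/
lemma fundamental (hn : 2 ≤ n) {φ : Eu n → ℝ} (hφ : ContDiff ℝ ∞ φ) (hc : HasCompactSupport φ) :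
    ∫ y, ker n 0 y * lap φ y = kap n * φ 0 := by
  have hfin : Module.finrank ℝ (Eu n) = n := by simp
  have : Nontrivial (Eu n) := by
    apply Module.nontrivial_of_finrank_pos (R := ℝ); omega
  have hne : ∀ᵐ x : Eu n, x ≠ 0 := by
    simp [ae_iff]
  have hlc : Continuous (lap φ) := (lap_contDiff hφ).continuous
  have hls := hasCompactSupport_lap hc
  have hI := integral_rho_pos (n := n)
  have ksm : ∀ a : ℝ, 0 < a → ContDiff ℝ ∞ (ker n a) := fun a ha =>
    contDiff_iff_contDiffAt.2 fun x => contDiffAt_ker (by positivity)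
  have hint : ∀ a : ℝ, (LocallyIntegrable (ker n a)) → Integrable (fun y => ker n a y * lap φ y) := by
    intro a ha
    simpa [mul_comm] using ha.integrable_smul_left_of_hasCompactSupport hlc hls
  have T1 : Tendsto (fun c : ℝ => ∫ y, ker n ((c ^ 2)⁻¹) y * lap φ y) atTop
      (𝓝 (∫ y, ker n 0 y * lap φ y)) := by
    have hsq : Tendsto (fun c : ℝ => (c ^ 2)⁻¹) atTop (𝓝 0) :=
      (tendsto_pow_atTop two_ne_zero).inv_tendsto_atTop
    refine tendsto_integral_filter_of_dominated_convergence
      (fun y => ‖ker n 0 y * lap φ y‖ + ‖ker n 1 y * lap φ y‖) ?_ ?_ ?_ ?_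
    · exact Eventually.of_forall fun c =>
        ((measurable_ker _).mul hlc.measurable).aestronglyMeasurable
    · filter_upwards [eventually_ge_atTop 1] with c hc1
      filter_upwards [hne] with y hy
      have hy' : 0 < ‖y‖ ^ 2 := by have := norm_pos_iff.2 hy; positivity
      have hc0 : 0 ≤ (c ^ 2)⁻¹ := by positivity
      have hc2 : (c ^ 2)⁻¹ ≤ 1 := inv_le_one_of_one_le₀ (by nlinarith)
      have m1 : ker n 0 y ≤ ker n ((c ^ 2)⁻¹) y := prof_mono (by linarith) (by linarith)
      have m2 : ker n ((c ^ 2)⁻¹) y ≤ ker n 1 y := prof_mono (by linarith) (by linarith)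
      simp only [norm_mul, ← add_mul, Real.norm_eq_abs]
      gcongr
      rw [abs_le]
      have := neg_abs_le (ker n 0 y)
      have := le_abs_self (ker n 1 y)
      have := abs_nonneg (ker n 0 y)
      have := abs_nonneg (ker n 1 y)
      constructor <;> linarith
    · exact (hint 0 (locallyIntegrable_ker hn)).norm.add
        (hint 1 (ksm 1 one_pos).continuous.locallyIntegrable).norm
    · filter_upwards [hne] with y hy
      have hy' : 0 < ‖y‖ ^ 2 + 0 := by have := norm_pos_iff.2 hy; positivity
      refine Tendsto.mul_const _ ?_
      have hcont : ContinuousAt (fun a : ℝ => prof n (‖y‖ ^ 2 + a)) 0 :=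
        ContinuousAt.comp (hasDerivAt_prof hy').continuousAt (by fun_prop)
      exact hcont.tendsto.comp hsq
  exact tendsto_nhds_unique T1 (tendsto_integral_ker_mul_lap hφ hc)

/-- A compactly supported smooth function is recovered from its Laplacian by convolution with the
Newtonian kernel. -/
lemma conv_ker_lap (hn : 2 ≤ n) {φ : Eu n → ℝ} (hφ : ContDiff ℝ ∞ φ) (hc : HasCompactSupport φ)
    (x : Eu n) : conv (ker n 0) (lap φ) x = kap n * φ x := by
  have h := fundamental hn (φ := fun y => φ (x - y)) (hφ.comp (contDiff_const.sub contDiff_id))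
    (hc.comp_homeomorph (Homeomorph.subLeft x))
  rw [conv]
  simpa only [lap_comp_sub hφ, sub_zero] using h

/-- The Newtonian potential solves Poisson's equation for compactly supported data. -/
lemma exists_lap_eq_of_hasCompactSupport (hn : 2 ≤ n) {φ : Eu n → ℝ} (hφ : ContDiff ℝ ∞ φ)
    (hc : HasCompactSupport φ) :
    ∃ u : Eu n → ℝ, ContDiff ℝ ∞ u ∧ ∀ x, lap u x = φ x := by
  have hli := locallyIntegrable_ker hn
  have hu := conv_contDiff hli hφ hc
  refine ⟨fun x => (kap n)⁻¹ * conv (ker n 0) φ x, contDiff_const.mul hu, fun x => ?_⟩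
  have := lap_lin isOpen_univ hu.contDiffOn hu.contDiffOn (mem_univ x) (kap n)⁻¹ 0
  simp only [zero_mul, add_zero] at this
  rw [this, lap_conv hli hφ hc, conv_ker_lap hn hφ hc, inv_mul_cancel_left₀ (kap_ne hn)]

end Newtonian

/-! ### Uniform limits of harmonic functions -/

section UniformLimits
variable {n : ℕ}

lemma contDiffAt_ker_zero {x : Eu n} (hx : x ≠ 0) : ContDiffAt ℝ ∞ (ker n 0) x :=
  contDiffAt_ker (by have := norm_pos_iff.2 hx; positivity)

lemma lap_ker_zero {x : Eu n} (hx : x ≠ 0) : lap (ker n 0) x = 0 := by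
  rw [lap_ker (by have := norm_pos_iff.2 hx; positivity)]; simp

/-- Local reproducing formula: near a point of `V`, every harmonic function on `V` is the
convolution of a fixed cutoff of itself with a fixed test function, namely the Laplacian of the
Newtonian kernel with its singularity removed. -/
lemma exists_reproducing (hn : 2 ≤ n) {V : Set (Eu n)} (hV : IsOpen V) {a : Eu n} (ha : a ∈ V) :
    ∃ U, IsOpen U ∧ a ∈ U ∧ U ⊆ V ∧ ∃ ψ η : Eu n → ℝ, ContDiff ℝ ∞ ψ ∧ HasCompactSupport ψ ∧
      tsupport ψ ⊆ V ∧ ContDiff ℝ ∞ η ∧ HasCompactSupport η ∧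
      ∀ h, HarmOn h V → ∀ x ∈ U, kap n * h x = conv (fun y => ψ y * h y) η x := by
  obtain ⟨R, hR, hRV⟩ := Metric.isOpen_iff.1 hV a ha
  have hKV : Metric.closedBall a (2 * (R / 3)) ⊆ V :=
    (Metric.closedBall_subset_ball (by linarith)).trans hRV
  obtain ⟨ψ, ψs, ψc, ψV, W, hWo, hKW, hWV, hW⟩ :=
    exists_cutoff (isCompact_closedBall a (2 * (R / 3))) hV hKV
  obtain ⟨χ, χs, χc, χV, W₀, hW₀o, hKW₀, -, hW₀⟩ :=
    exists_cutoff (isCompact_singleton (x := (0 : Eu n))) (Metric.isOpen_ball (x := 0) (ε := R / 3))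
      (by simpa using (by positivity : 0 < R / 3))
  have h0 : (0 : Eu n) ∈ W₀ := hKW₀ rfl
  let A : Eu n → ℝ := fun x => (1 - χ x) * ker n 0 x
  have hA : ContDiff ℝ ∞ A := by
    refine contDiff_iff_contDiffAt.2 fun x => ?_
    by_cases hx : x = 0
    · subst hx
      refine (contDiffAt_const (c := (0 : ℝ))).congr_of_eventuallyEq ?_
      filter_upwards [hW₀o.mem_nhds h0] with y hy
      simp [A, hW₀ y hy]
    · exact (contDiff_const.sub χs).contDiffAt.mul (contDiffAt_ker_zero hx)
  have hηc : HasCompactSupport (lap A) := by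
    refine HasCompactSupport.intro χc.isCompact fun x hx => ?_
    have hx0 : x ≠ 0 := by
      rintro rfl
      exact hx (subset_tsupport _ (by simp [hW₀ 0 h0]))
    rw [← lap_ker_zero hx0]
    refine lap_congr ?_
    filter_upwards [(isClosed_tsupport χ).isOpen_compl.mem_nhds hx] with y hy
    simp [A, image_eq_zero_of_notMem_tsupport hy]
  refine ⟨Metric.ball a (R / 3), Metric.isOpen_ball, Metric.mem_ball_self (by positivity),
    (Metric.ball_subset_ball (by linarith)).trans hRV, ψ, lap A, ψs, ψc, ψV, lap_contDiff hA, hηc,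
    fun h hh x hx => ?_⟩
  have hs : ContDiff ℝ ∞ (fun y => ψ y * h y) := contDiff_cutoff hV ψs ψV hh.1
  have hc : HasCompactSupport (fun y => ψ y * h y) := ψc.mul_right
  have hxW : x ∈ W := hKW (Metric.ball_subset_closedBall
    (Metric.ball_subset_ball (by linarith) hx))
  have e1 := conv_ker_lap hn hs hc x
  simp only [hW x hxW, one_mul] at e1
  rw [← e1, conv_comm (H := fun y => ψ y * h y)]
  have e2 : ∀ y, ker n 0 y * lap (fun y => ψ y * h y) (x - y)
      = A y * lap (fun z => (fun y => ψ y * h y) (x - z)) y := by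
    intro y
    rw [lap_comp_sub hs]
    by_cases hy : y ∈ Metric.ball (0 : Eu n) (R / 3)
    · have hxy : x - y ∈ W := by
        refine hKW ?_
        rw [mem_closedBall_iff_norm, show x - y - a = (x - a) - y by abel]
        have h1 := mem_ball_iff_norm.1 hx
        have h2 := mem_ball_zero_iff.1 hy
        linarith [norm_sub_le (x - a) y]
      have : lap (fun y => ψ y * h y) (x - y) = 0 := by
        rw [← hh.2 _ (hWV hxy)]
        refine lap_congr ?_
        filter_upwards [hWo.mem_nhds hxy] with z hz
        rw [hW z hz, one_mul]
      simp [this]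
    · have : χ y = 0 := image_eq_zero_of_notMem_tsupport fun h => hy (χV h)
      simp [A, this]
  have hs' : ContDiff ℝ ∞ (fun z => (fun y => ψ y * h y) (x - z)) :=
    hs.comp (contDiff_const.sub contDiff_id)
  have hc' : HasCompactSupport (fun z => (fun y => ψ y * h y) (x - z)) :=
    hc.comp_homeomorph (Homeomorph.subLeft x)
  simp only [conv]
  rw [integral_congr_ae (Eventually.of_forall e2)]
  exact integral_mul_lap hA hs' hc'

/-- A uniform limit of harmonic functions is smooth and harmonic. -/
lemma harmOn_of_tendstoUniformlyOn (hn : 2 ≤ n) {V : Set (Eu n)} (hV : IsOpen V)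
    {u : ℕ → Eu n → ℝ} {h : Eu n → ℝ} (hu : ∀ᶠ j in atTop, HarmOn (u j) V)
    (hlim : TendstoUniformlyOn u h atTop V) : HarmOn h V := by
  have hcont : ContinuousOn h V := hlim.continuousOn (hu.mono fun j hj => hj.1.continuousOn).frequently
  have key : ∀ ψ η : Eu n → ℝ, Continuous ψ → HasCompactSupport ψ → tsupport ψ ⊆ V →
      Continuous η → HasCompactSupport η → ∀ x,
      Tendsto (fun j => conv (fun y => ψ y * u j y) η x) atTop
        (𝓝 (conv (fun y => ψ y * h y) η x)) := by
    intro ψ η ψs ψc ψV ηs ηc x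
    have hψh := continuous_cutoff hV ψs ψV hcont
    have hηx : Continuous fun y => η (x - y) := ηs.comp (by fun_prop)
    refine tendsto_integral_filter_of_dominated_convergence
      (fun y => (|ψ y * h y| + |ψ y|) * |η (x - y)|) ?_ ?_ ?_ ?_
    · filter_upwards [hu] with j hj
      exact ((continuous_cutoff hV ψs ψV hj.1.continuousOn).mul hηx).aestronglyMeasurable
    · filter_upwards [Metric.tendstoUniformlyOn_iff.1 hlim 1 one_pos] with j hj
      refine Eventually.of_forall fun y => ?_
      rw [norm_mul, Real.norm_eq_abs, Real.norm_eq_abs]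
      gcongr
      by_cases hy : y ∈ V
      · have h1 := hj y hy
        rw [Real.dist_eq] at h1
        have : ψ y * u j y = ψ y * h y - ψ y * (h y - u j y) := by ring
        rw [this]
        refine (abs_sub _ _).trans ?_
        rw [abs_mul (ψ y) (h y - u j y)]
        nlinarith [abs_nonneg (ψ y)]
      · have : ψ y = 0 := image_eq_zero_of_notMem_tsupport fun h => hy (ψV h)
        simp [this]
    · refine Continuous.integrable_of_hasCompactSupport
        ((hψh.abs.add ψs.abs).mul hηx.abs) ?_
      refine HasCompactSupport.mul_right ?_
      exact (ψc.mul_right.comp_left abs_zero).add (ψc.comp_left abs_zero)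
    · refine Eventually.of_forall fun y => Tendsto.mul_const _ ?_
      by_cases hy : y ∈ V
      · exact (hlim.tendsto_at hy).const_mul _
      · have : ψ y = 0 := image_eq_zero_of_notMem_tsupport fun h => hy (ψV h)
        simp [this]
  have hk := kap_ne hn
  have loc : ∀ a ∈ V, ContDiffAt ℝ ∞ h a ∧ lap h a = 0 := by
    intro a ha
    obtain ⟨U, hU, haU, hUV, ψ, η, ψs, ψc, ψV, ηs, ηc, hrep⟩ := exists_reproducing hn hV ha
    have hli : ∀ {w}, ContinuousOn w V → LocallyIntegrable (fun y => ψ y * w y) := fun hw =>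
      (continuous_cutoff hV ψs.continuous ψV hw).locallyIntegrable
    have hcs : ∀ {w}, ContinuousOn w V → ContDiff ℝ ∞ (conv (fun y => ψ y * w y) η) := fun hw =>
      conv_contDiff (hli hw) ηs ηc
    have hrep' : ∀ x ∈ U, h x = (kap n)⁻¹ * conv (fun y => ψ y * h y) η x := by
      intro x hx
      have t1 := key ψ η ψs.continuous ψc ψV ηs.continuous ηc x
      have t2 := (hlim.tendsto_at (hUV hx)).const_mul (kap n)
      have : kap n * h x = conv (fun y => ψ y * h y) η x := by
        refine tendsto_nhds_unique (t2.congr' ?_) t1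
        filter_upwards [hu] with j hj using hrep _ hj x hx
      rw [← this, inv_mul_cancel_left₀ hk]
    have hlap : ∀ w, ContinuousOn w V →
        (∀ x ∈ U, w x = (kap n)⁻¹ * conv (fun y => ψ y * w y) η x) →
        lap w a = (kap n)⁻¹ * conv (fun y => ψ y * w y) (lap η) a := by
      intro w hw hr
      have ev : w =ᶠ[𝓝 a] fun x => (kap n)⁻¹ * conv (fun y => ψ y * w y) η x := by
        filter_upwards [hU.mem_nhds haU] with x hx using hr x hx
      have := lap_lin isOpen_univ (hcs hw).contDiffOn (hcs hw).contDiffOn (mem_univ a) (kap n)⁻¹ 0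
      simp only [zero_mul, add_zero] at this
      rw [lap_congr ev, this, lap_conv (hli hw) ηs ηc]
    refine ⟨?_, ?_⟩
    · refine (((contDiff_const (c := (kap n)⁻¹)).mul
        (hcs hcont)).contDiffAt).congr_of_eventuallyEq ?_
      filter_upwards [hU.mem_nhds haU] with x hx using hrep' x hx
    · rw [hlap h hcont hrep']
      have t := (key ψ (lap η) ψs.continuous ψc ψV (lap_contDiff ηs).continuous
        (hasCompactSupport_lap ηc) a).const_mul (kap n)⁻¹
      refine tendsto_nhds_unique t (tendsto_const_nhds.congr' ?_)
      filter_upwards [hu] with j hj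
      rw [← hlap (u j) hj.1.continuousOn fun x hx => by
        rw [← hrep _ hj x hx, inv_mul_cancel_left₀ hk]]
      exact (hj.2 a ha).symm
  exact ⟨fun a ha => (loc a ha).1.contDiffWithinAt, fun a ha => (loc a ha).2⟩

end UniformLimits

/-! ### Pole pushing -/

section PolePushing
variable {n : ℕ}

/-- Post-composition with a function that is analytic at `1` is an analytic operation on continuous
functions near the constant `1`: it is given by the same power series. -/
lemma exists_analyticAt_comp {X : Type*} [TopologicalSpace X] [CompactSpace X] {g : ℝ → ℝ}
    (hg : AnalyticAt ℝ g 1) : ∃ G : C(X, ℝ) → C(X, ℝ), AnalyticAt ℝ G 0 ∧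
      ∀ᶠ v in 𝓝 (0 : C(X, ℝ)), ∀ x, G v x = g (1 + v x) := by
  obtain ⟨p, r, hp⟩ := hg
  obtain ⟨s, hs0, hsr⟩ := ENNReal.lt_iff_exists_nnreal_btwn.1 hp.r_pos
  obtain ⟨C, -, hC⟩ := p.norm_mul_pow_le_of_lt_radius (hsr.trans_le hp.r_le)
  let q : FormalMultilinearSeries ℝ C(X, ℝ) C(X, ℝ) :=
    FormalMultilinearSeries.ofScalars C(X, ℝ) p.coeff
  have hq : (s : ENNReal) ≤ q.radius := by
    refine q.le_radius_of_eventually_le C ?_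
    filter_upwards [eventually_gt_atTop 0] with k hk
    refine le_trans ?_ (hC k)
    rw [p.norm_apply_eq_norm_coef]
    exact mul_le_mul_of_nonneg_right (FormalMultilinearSeries.ofScalars_norm_le _ _ _ hk)
      (by positivity)
  have hG := q.hasFPowerSeriesOnBall (hs0.trans_le hq)
  refine ⟨q.sum, hG.analyticAt, ?_⟩
  filter_upwards [Metric.eball_mem_nhds (0 : C(X, ℝ)) hs0] with v hv x
  have h1 := hG.hasSum (y := v) (Metric.eball_subset_eball hq hv)
  have h2 := h1.mapL (ContinuousMap.evalCLM ℝ x)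
  have h3 := hp.hasSum (y := v x) (by
    have hvs : edist v 0 < s := hv
    have : edist (v x) 0 ≤ edist v 0 := by
      rw [edist_dist, edist_dist]
      exact ENNReal.ofReal_le_ofReal (ContinuousMap.dist_apply_le_dist (f := v) (g := 0) x)
    exact (this.trans_lt hvs).trans hsr)
  simp only [zero_add] at h2
  refine h2.unique ?_
  refine h3.congr_fun ?_
  intro k
  simp [q, FormalMultilinearSeries.ofScalars, mul_comm]

lemma analyticAt_prof {s : ℝ} (hs : 0 < s) : AnalyticAt ℝ (prof n) s := by
  refine ContDiffAt.analyticAt ?_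
  unfold prof
  split_ifs
  · exact Real.contDiffAt_log.2 hs.ne'
  · exact (Real.contDiffAt_rpow_const_of_ne hs.ne').div_const _

lemma prof_continuousOn : ContinuousOn (prof n) (Ioi 0) :=
  fun _ hs => (analyticAt_prof hs).continuousAt.continuousWithinAt

/-- The profile turns products into sums up to a scalar factor. -/
lemma exists_prof_mul (n : ℕ) : ∃ p q : ℝ → ℝ, ContinuousOn p (Ioi 0) ∧ ContinuousOn q (Ioi 0) ∧
    ∀ a b, 0 < a → 0 < b → prof n (a * b) = p a + q a * prof n b := by
  by_cases h : n = 2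
  · refine ⟨Real.log, fun _ => 1, fun s hs => ?_, continuousOn_const, fun a b ha hb => ?_⟩
    · exact (Real.continuousAt_log (ne_of_gt hs)).continuousWithinAt
    · simp [prof, h, Real.log_mul ha.ne' hb.ne']
  · refine ⟨fun _ => 0, fun a => a ^ (1 - (n : ℝ) / 2), continuousOn_const, fun s hs => ?_,
      fun a b ha hb => ?_⟩
    · exact (Real.continuousAt_rpow_const _ _ (Or.inl (ne_of_gt hs))).continuousWithinAt
    · simp only [prof, h, if_false, Real.mul_rpow ha.le hb.le]; ring

/-- If `S` is an analytic curve of continuous functions and `S t₀` is positive, then `prof n ∘ S t`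
is, for `t` near `t₀`, an analytic curve of continuous functions. The multiplicative behaviour of
`prof n` reduces this to a power series at the constant function `1`, by writing
`S t = S t₀ * (1 + v t)` with `v t` small. -/
lemma exists_analyticAt_prof_comp {X : Type*} [TopologicalSpace X] [CompactSpace X]
    {S : ℝ → C(X, ℝ)} {t₀ : ℝ} (hS : AnalyticAt ℝ S t₀) (hpos : ∀ x, 0 < S t₀ x) :
    ∃ Ψ : ℝ → C(X, ℝ), AnalyticAt ℝ Ψ t₀ ∧ ∀ᶠ t in 𝓝 t₀, ∀ x, Ψ t x = prof n (S t x) := by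
  obtain ⟨G, hG, hGe⟩ := exists_analyticAt_comp (X := X) (analyticAt_prof (n := n) one_pos)
  obtain ⟨p, q, hp, hq, hpq⟩ := exists_prof_mul n
  have comp : ∀ {p : ℝ → ℝ}, ContinuousOn p (Ioi 0) → Continuous fun x => p (S t₀ x) :=
    fun hp => hp.comp_continuous (S t₀).continuous hpos
  let I : C(X, ℝ) := ⟨fun x => (S t₀ x)⁻¹, (S t₀).continuous.inv₀ fun x => (hpos x).ne'⟩
  let Pp : C(X, ℝ) := ⟨_, comp hp⟩
  let Q : C(X, ℝ) := ⟨_, comp hq⟩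
  let v : ℝ → C(X, ℝ) := fun t => I * S t - 1
  have hv : AnalyticAt ℝ v t₀ := (analyticAt_const.mul hS).sub analyticAt_const
  have hv0 : v t₀ = 0 := by
    ext x
    simp [v, I, inv_mul_cancel₀ (hpos x).ne']
  have htend : Tendsto v (𝓝 t₀) (𝓝 0) := hv0 ▸ hv.continuousAt.tendsto
  refine ⟨fun t => Pp + Q * G (v t), analyticAt_const.add (analyticAt_const.mul
    (AnalyticAt.comp (by rwa [hv0]) hv)), ?_⟩
  filter_upwards [htend.eventually hGe, htend.eventually (Metric.ball_mem_nhds 0 one_pos)]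
    with t h1 h2 x
  have h3 : |v t x| < 1 := by
    have := (ContinuousMap.norm_coe_le_norm (v t) x).trans_lt (mem_ball_zero_iff.1 h2)
    simpa using this
  have h4 : 1 + v t x = (S t₀ x)⁻¹ * S t x := by simp [v, I]
  have h5 : 0 < 1 + v t x := by linarith [(abs_lt.1 h3).1]
  have h6 : S t x = S t₀ x * (1 + v t x) := by
    rw [h4, mul_inv_cancel_left₀ (hpos x).ne']
  rw [h6, hpq _ _ (hpos x) h5]
  simp [Pp, Q, h1 x]

/-- The restriction to `K` of the kernel with pole at `y`, which is continuous for `y ∉ K`; it is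
set to `0` when it fails to be continuous. -/
noncomputable def kerOn (K : Set (Eu n)) (y : Eu n) : C(K, ℝ) :=
  open Classical in
  if h : Continuous fun x : K => prof n (‖(x : Eu n) - y‖ ^ 2) then ⟨_, h⟩ else 0

lemma sq_pos_of_notMem {K : Set (Eu n)} {y : Eu n} (hy : y ∉ K) (x : K) :
    0 < ‖(x : Eu n) - y‖ ^ 2 := by
  have : (x : Eu n) - y ≠ 0 := sub_ne_zero.2 fun h => hy (h ▸ x.2)
  have := norm_pos_iff.2 this
  positivity

lemma kerOn_apply {K : Set (Eu n)} {y : Eu n} (hy : y ∉ K) (x : K) :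
    kerOn K y x = prof n (‖(x : Eu n) - y‖ ^ 2) := by
  have h : Continuous fun x : K => prof n (‖(x : Eu n) - y‖ ^ 2) :=
    prof_continuousOn.comp_continuous (by fun_prop) (sq_pos_of_notMem hy)
  rw [kerOn, dif_pos h]; rfl

/-- Pole pushing: a functional on `C(K)` that kills all harmonic functions on the ball `B(c, R)`
kills the kernel with any pole outside the star-shaped set `K`. Moving the pole along the ray from
`c`, the value of the functional depends analytically on the position, and it vanishes once the pole
has left the ball. -/
lemma pole_pushing {K : Set (Eu n)} (hK : IsCompact K) {c : Eu n} (hcK : c ∈ K)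
    (hst : StarConvex ℝ c K) (R : ℝ) (l : C(K, ℝ) →L[ℝ] ℝ)
    (hl : ∀ g : C(K, ℝ), ∀ w, HarmOn w (Metric.ball c R) → (∀ x : K, g x = w x) → l g = 0)
    {y : Eu n} (hy : y ∉ K) : l (kerOn K y) = 0 := by
  have : CompactSpace K := isCompact_iff_compactSpace.1 hK
  let Y : ℝ → Eu n := fun t => c + t • (y - c)
  have hY : ∀ t, 1 ≤ t → Y t ∉ K := by
    intro t ht hmem
    have h0 : (0 : ℝ) < t := by linarith
    have := hst.add_smul_sub_mem hmem (inv_nonneg.2 h0.le) (inv_le_one_of_one_le₀ ht)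
    apply hy
    simpa [Y, smul_smul, inv_mul_cancel₀ h0.ne'] using this
  -- the squared distance to the pole `Y t` is a quadratic polynomial in `t` with values in `C(K)`
  let a : C(K, ℝ) := ⟨fun x => ‖(x : Eu n) - c‖ ^ 2, by fun_prop⟩
  let b : C(K, ℝ) := ⟨fun x => 2 * inner ℝ ((x : Eu n) - c) (y - c), by fun_prop⟩
  let d : C(K, ℝ) := ⟨fun _ => ‖y - c‖ ^ 2, by fun_prop⟩
  let S : ℝ → C(K, ℝ) := fun t => a - t • b + t ^ 2 • d
  have hSv : ∀ t x, S t x = ‖(x : Eu n) - Y t‖ ^ 2 := by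
    intro t x
    have : (x : Eu n) - Y t = ((x : Eu n) - c) - t • (y - c) := by simp only [Y]; abel
    rw [this, norm_sub_sq_real, norm_smul, inner_smul_right, mul_pow]
    simp [S, a, b, d]
    ring
  have hSa : ∀ t, AnalyticAt ℝ S t := fun t =>
    (analyticAt_const.sub (analyticAt_id.smul analyticAt_const)).add
      ((analyticAt_id.pow 2).smul analyticAt_const)
  have hopen : IsOpen {t | Y t ∉ K} :=
    hK.isClosed.isOpen_compl.preimage (by fun_prop : Continuous Y)
  have han : AnalyticOnNhd ℝ (fun t => l (kerOn K (Y t))) (Ici 1) := by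
    intro t ht
    obtain ⟨Ψ, hΨ, hΨe⟩ := exists_analyticAt_prof_comp (n := n) (hSa t)
      (fun x => by rw [hSv]; exact sq_pos_of_notMem (hY t ht) x)
    refine ((l.analyticAt _).comp hΨ).congr ?_
    filter_upwards [hΨe, hopen.mem_nhds (hY t ht)] with s hs hs'
    simp only [Function.comp]
    congr 1
    ext x
    rw [hs x, kerOn_apply hs', hSv]
  have hyc : 0 < ‖y - c‖ := norm_pos_iff.2 (sub_ne_zero.2 fun h => hy (h ▸ hcK))
  -- for `t > T - 1` the pole `Y t` has distance at least `R` from `c`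
  obtain ⟨T, hT1, hT2⟩ : ∃ T : ℝ, 1 < T ∧ R ≤ T * ‖y - c‖ - ‖y - c‖ := by
    refine ⟨2 + |R| / ‖y - c‖, ?_, ?_⟩
    · have : 0 ≤ |R| / ‖y - c‖ := by positivity
      linarith
    · rw [add_mul, div_mul_cancel₀ _ hyc.ne']
      linarith [le_abs_self R]
  have hzero : ∀ t, T - 1 < t → 1 ≤ t → l (kerOn K (Y t)) = 0 := by
    intro t ht ht1
    have hne : ∀ x ∈ Metric.ball c R, x - Y t ≠ 0 := by
      intro x hx h0
      rw [sub_eq_zero] at h0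
      rw [h0, Metric.mem_ball, dist_eq_norm] at hx
      simp only [Y, add_sub_cancel_left, norm_smul, Real.norm_eq_abs] at hx
      rw [abs_of_nonneg (by linarith)] at hx
      nlinarith
    refine hl _ (fun x => ker n 0 (x - Y t)) ⟨fun x hx => ?_, fun x hx => ?_⟩ fun x => ?_
    · exact ((contDiffAt_ker_zero (hne x hx)).comp x
        (contDiffAt_id.sub contDiffAt_const)).contDiffWithinAt
    · have h1 : ∀ (f : Eu n → ℝ) (v : Eu n), pd (fun x => f (x - Y t)) v
          = fun x => pd f v (x - Y t) := by
        intro f v; ext z; simp only [pd, fderiv_comp_sub]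
      have : lap (fun x => ker n 0 (x - Y t)) x = lap (ker n 0) (x - Y t) := by
        simp only [lap, h1]
      rw [this, lap_ker_zero (hne x hx)]
    · rw [kerOn_apply (hY t ht1), ker, add_zero]
  have := han.eqOn_zero_of_preconnected_of_eventuallyEq_zero isPreconnected_Ici
    (z₀ := T) hT1.le (by
      filter_upwards [Ioi_mem_nhds hT1, Ioi_mem_nhds (sub_one_lt T)] with t h1 h2
      exact hzero t h2 (le_of_lt h1)) (mem_Ici.2 le_rfl)
  simpa [Y] using this

end PolePushing

/-! ### Runge approximation on star-shaped compact sets -/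

section Runge
variable {n : ℕ}

/-- A function harmonic near the compact set `K` is, on `K`, a superposition of Newtonian kernels
with poles off `K`; a functional killing all these kernels therefore kills the function. -/
lemma eq_zero_of_kerOn (hn : 2 ≤ n) {K V : Set (Eu n)} (hK : IsCompact K) (hV : IsOpen V)
    (hKV : K ⊆ V) {h : Eu n → ℝ} (hh : HarmOn h V) (l : C(K, ℝ) →L[ℝ] ℝ)
    (hl : ∀ y ∉ K, l (kerOn K y) = 0) (g : C(K, ℝ)) (hg : ∀ x : K, g x = h x) : l g = 0 := by
  have : CompactSpace K := isCompact_iff_compactSpace.1 hK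
  obtain ⟨χ, χs, χc, χV, W, hW, hKW, hWV, hW1⟩ := exists_cutoff hK hV hKV
  have hs : ContDiff ℝ ∞ (fun y => χ y * h y) := contDiff_cutoff hV χs χV hh.1
  have hc : HasCompactSupport (fun y => χ y * h y) := χc.mul_right
  set f := lap (fun y => χ y * h y) with hf
  have hfs : Continuous f := (lap_contDiff hs).continuous
  have hfc : HasCompactSupport f := hasCompactSupport_lap hc
  have hfW : ∀ x ∈ W, f x = 0 := by
    intro x hx
    rw [← hh.2 x (hWV hx), hf]
    refine lap_congr ?_
    filter_upwards [hW.mem_nhds hx] with y hy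
    rw [hW1 y hy, one_mul]
  have hSK : ∀ y ∈ tsupport f, y ∉ K := by
    intro y hy hyK
    have : tsupport f ⊆ Wᶜ :=
      closure_minimal (fun z hz hzW => hz (hfW z hzW)) hW.isClosed_compl
    exact this hy (hKW hyK)
  obtain ⟨δ, hδ, hδ'⟩ : ∃ δ : ℝ, 0 < δ ∧ ∀ p ∈ K ×ˢ tsupport f, δ ≤ ‖p.1 - p.2‖ ^ 2 :=
    (hK.prod hfc.isCompact).exists_forall_le' (by fun_prop)
      fun p hp => sq_pos_of_notMem (hSK _ hp.2) ⟨p.1, hp.1⟩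
  -- truncating the squared distance at `δ` changes nothing for poles in `tsupport f`, and makes the
  -- kernel depend continuously on its pole everywhere
  let Φ : C(Eu n, C(K, ℝ)) := ContinuousMap.curry
    ⟨fun p : Eu n × K => prof n (max (‖(p.2 : Eu n) - p.1‖ ^ 2) δ),
      prof_continuousOn.comp_continuous (by fun_prop) fun p => lt_max_of_lt_right hδ⟩
  have hΦ : ∀ y ∈ tsupport f, Φ y = kerOn K y := by
    intro y hy
    ext x
    rw [kerOn_apply (hSK y hy)]
    change prof n (max (‖(x : Eu n) - y‖ ^ 2) δ) = _
    rw [max_eq_left (hδ' (x, y) ⟨x.2, hy⟩)]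
  have hint : Integrable fun y => f y • Φ y :=
    (hfs.smul Φ.continuous).integrable_of_hasCompactSupport hfc.smul_right
  have hrep : kap n • g = ∫ y, f y • Φ y := by
    ext x
    have e1 := conv_ker_lap hn hs hc (x : Eu n)
    rw [hW1 _ (hKW x.2), one_mul, conv_comm] at e1
    have e2 := (ContinuousMap.evalCLM ℝ x).integral_comp_comm hint
    change (∫ y, f y • Φ y x) = (∫ y, f y • Φ y) x at e2
    rw [← e2, ContinuousMap.smul_apply, smul_eq_mul, hg, ← e1, conv]
    refine integral_congr_ae (Eventually.of_forall fun y => ?_)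
    by_cases hy : y ∈ tsupport f
    · simp only [hΦ y hy, kerOn_apply (hSK y hy), ker, add_zero, smul_eq_mul, f]
    · have : f y = 0 := image_eq_zero_of_notMem_tsupport hy
      have h2 : lap (fun y => χ y * h y) y = 0 := this
      simp [this, h2]
  have : kap n * l g = 0 := by
    rw [← smul_eq_mul, ← map_smul, hrep, ← l.integral_comp_comm hint]
    refine integral_eq_zero_of_ae (Eventually.of_forall fun y => ?_)
    by_cases hy : y ∈ tsupport f
    · simp [hΦ y hy, hl y (hSK y hy)]
    · simp [image_eq_zero_of_notMem_tsupport hy]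
  exact (mul_eq_zero.1 this).resolve_left (kap_ne hn)

/-- **Runge approximation**: a function harmonic near a compact star-shaped set `K` is, uniformly on
`K`, a limit of functions harmonic on any prescribed ball. -/
theorem runge (hn : 2 ≤ n) {K V : Set (Eu n)} (hK : IsCompact K) {c : Eu n} (hcK : c ∈ K)
    (hst : StarConvex ℝ c K) (hV : IsOpen V) (hKV : K ⊆ V) {h : Eu n → ℝ} (hh : HarmOn h V)
    (R : ℝ) {ε : ℝ} (hε : 0 < ε) :
    ∃ w, HarmOn w (Metric.ball c R) ∧ ∀ x ∈ K, |h x - w x| ≤ ε := by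
  have : CompactSpace K := isCompact_iff_compactSpace.1 hK
  -- the restrictions to `K` of the functions harmonic on the ball
  let P : Submodule ℝ C(K, ℝ) :=
    { carrier := {g | ∃ w, HarmOn w (Metric.ball c R) ∧ ∀ x : K, g x = w x}
      add_mem' := by
        rintro g g' ⟨w, hw, h1⟩ ⟨w', hw', h2⟩
        refine ⟨fun x => w x + w' x, ⟨hw.1.add hw'.1, fun x hx => ?_⟩, fun x => by simp [h1, h2]⟩
        have := lap_lin Metric.isOpen_ball hw.1 hw'.1 hx 1 1
        simpa [hw.2 x hx, hw'.2 x hx] using this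
      zero_mem' := by
        refine ⟨fun _ => 0, ⟨contDiffOn_const, fun x _ => ?_⟩, fun x => rfl⟩
        have hz : ∀ v : Eu n, pd (fun _ : Eu n => (0 : ℝ)) v = fun _ => 0 := by
          intro v; ext; simp [pd]
        simp [lap, hz]
      smul_mem' := by
        rintro a g ⟨w, hw, h1⟩
        refine ⟨fun x => a * w x, ⟨contDiffOn_const.mul hw.1, fun x hx => ?_⟩,
          fun x => by simp [h1]⟩
        have := lap_lin Metric.isOpen_ball hw.1 hw.1 hx a 0
        simpa [hw.2 x hx] using this }
  let g : C(K, ℝ) := ⟨fun x => h x,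
    hh.1.continuousOn.comp_continuous continuous_subtype_val fun x => hKV x.2⟩
  have hg : g ∈ P.topologicalClosure := by
    by_contra hg
    obtain ⟨l, s, hl, hs⟩ := geometric_hahn_banach_closed_point
      P.topologicalClosure.convex P.isClosed_topologicalClosure hg
    have h0 : ∀ a ∈ P, l a = 0 := by
      -- a linear form that is bounded above on a subspace vanishes there
      intro a ha
      by_contra hne
      have := hl _ (P.le_topologicalClosure (P.smul_mem (s / l a) ha))
      rw [map_smul, smul_eq_mul, div_mul_cancel₀ _ hne] at this
      exact lt_irrefl _ this
    have h1 : l g = 0 := eq_zero_of_kerOn hn hK hV hKV hh l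
      (fun y hy => pole_pushing hK hcK hst R l (fun a w hw ha => h0 a ⟨w, hw, ha⟩) hy) g
      fun x => rfl
    have h2 := hl 0 (Submodule.zero_mem _)
    rw [map_zero] at h2
    rw [h1] at hs
    exact lt_asymm h2 hs
  obtain ⟨g', ⟨w, hw, hg'⟩, hd⟩ := Metric.mem_closure_iff.1 hg ε hε
  refine ⟨w, hw, fun x hx => ?_⟩
  have := (ContinuousMap.dist_apply_le_dist (f := g) (g := g') ⟨x, hx⟩).trans hd.le
  rw [hg', Real.dist_eq] at this
  exact this

end Runge

/-! ### Poisson's equation on star-shaped open sets -/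

section Poisson
variable {n : ℕ}

/-- An open star-shaped set is exhausted by compact sets that are star-shaped about the same
point: the cones over the members of any compact exhaustion. -/
lemma exists_star_exhaustion {U : Set (Eu n)} (hU : IsOpen U) {c : Eu n} (hc : c ∈ U)
    (hst : StarConvex ℝ c U) : ∃ K : ℕ → Set (Eu n), (∀ m, IsCompact (K m)) ∧ (∀ m, c ∈ K m) ∧
      (∀ m, StarConvex ℝ c (K m)) ∧ (∀ m, K m ⊆ U) ∧ Monotone K ∧
      ∀ x ∈ U, ∃ m, x ∈ interior (K m) := by
  have : LocallyCompactSpace U := hU.locallyCompactSpace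
  let L : CompactExhaustion U := CompactExhaustion.choice U
  let K : ℕ → Set (Eu n) := fun m =>
    (fun p : ℝ × Eu n => c + p.1 • (p.2 - c)) '' (Icc 0 1 ×ˢ insert c (Subtype.val '' L m))
  have hcK : ∀ m, c ∈ K m := fun m => ⟨(0, c), ⟨by simp, by simp⟩, by simp⟩
  refine ⟨K, fun m => ?_, hcK, fun m => ?_, fun m => ?_, fun i j hij => ?_, fun x hx => ?_⟩
  · exact (isCompact_Icc.prod (((L.isCompact m).image continuous_subtype_val).insert c)).image
      (by fun_prop)
  · rw [starConvex_iff_forall_pos (hcK m)]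
    rintro _ ⟨⟨t, y⟩, ⟨ht, hy⟩, rfl⟩ a b ha hb hab
    refine ⟨(b * t, y), ⟨⟨mul_nonneg hb.le ht.1, mul_le_one₀ (by linarith) ht.1 ht.2⟩, hy⟩, ?_⟩
    have : a = 1 - b := by linarith
    subst this
    simp only [mul_smul]
    module
  · rintro _ ⟨⟨t, y⟩, ⟨ht, hy⟩, rfl⟩
    have hyU : y ∈ U := by
      rcases hy with rfl | ⟨z, -, rfl⟩
      exacts [hc, z.2]
    exact hst.add_smul_sub_mem hyU ht.1 ht.2
  · exact image_mono (prod_mono_right (insert_subset_insert (image_mono (L.subset hij))))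
  · obtain ⟨m, hm⟩ := L.exists_mem_nhds ⟨x, hx⟩
    refine ⟨m, mem_interior_iff_mem_nhds.2 ?_⟩
    have h1 : Subtype.val '' L m ∈ 𝓝 x := (hU.isOpenEmbedding_subtypeVal.image_mem_nhds).2 hm
    filter_upwards [h1] with y hy
    exact ⟨(1, y), ⟨by simp, Or.inr hy⟩, by simp⟩

/-- **Poisson's equation** is solvable with smooth data on an open star-shaped set. Solutions near
the members of a star-shaped exhaustion are corrected by functions harmonic on large balls, provided by
Runge approximation, so as to converge. -/
theorem poisson (hn : 2 ≤ n) {U : Set (Eu n)} (hU : IsOpen U) {c : Eu n} (hc : c ∈ U)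
    (hst : StarConvex ℝ c U) {f : Eu n → ℝ} (hf : ContDiffOn ℝ ∞ f U) :
    ∃ u, ContDiffOn ℝ ∞ u U ∧ ∀ x ∈ U, lap u x = f x := by
  obtain ⟨K, hK, hcK, hKst, hKU, hKm, hKi⟩ := exists_star_exhaustion hU hc hst
  -- `Q m u`: `u` solves the equation near `K m`
  let Q : ℕ → (Eu n → ℝ) → Prop := fun m u => ∃ V, IsOpen V ∧ K m ⊆ V ∧
    ContDiffOn ℝ ∞ u V ∧ ∀ x ∈ V, lap u x = f x
  have hloc : ∀ m, ∃ u, Q m u := by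
    intro m
    obtain ⟨χ, χs, χc, χU, W, hW, hKW, -, hW1⟩ := exists_cutoff (hK m) hU (hKU m)
    obtain ⟨u, hu, hlu⟩ := exists_lap_eq_of_hasCompactSupport hn
      (contDiff_cutoff hU χs χU hf) χc.mul_right
    exact ⟨u, W, hW, hKW, hu.contDiffOn, fun x hx => by rw [hlu, hW1 x hx, one_mul]⟩
  have hstep : ∀ m u, Q m u → ∃ u', Q (m + 1) u' ∧ ∀ x ∈ K m, |u x - u' x| ≤ (1 / 2) ^ m := by
    rintro m u ⟨V, hV, hKV, hu, hlu⟩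
    obtain ⟨φ, V', hV', hKV', hφ, hlφ⟩ := hloc (m + 1)
    obtain ⟨R, hR⟩ := (hK (m + 1)).isBounded.subset_ball c
    have hh : HarmOn (fun x => φ x - u x) (V' ∩ V) := by
      have h1 := hφ.mono (inter_subset_left (t := V))
      have h2 := hu.mono (inter_subset_right (s := V'))
      refine ⟨h1.sub h2, fun x hx => ?_⟩
      rw [lap_sub (hV'.inter hV) h1 h2 hx, hlφ x hx.1, hlu x hx.2, sub_self]
    obtain ⟨w, hw, hwK⟩ := runge hn (hK m) (hcK m) (hKst m) (hV'.inter hV)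
      (subset_inter ((hKm m.le_succ).trans hKV') hKV) hh R
      (by positivity : (0 : ℝ) < (1 / 2) ^ m)
    refine ⟨fun x => φ x - w x, ⟨V' ∩ Metric.ball c R, hV'.inter Metric.isOpen_ball,
      subset_inter hKV' hR, ?_, fun x hx => ?_⟩, fun x hx => ?_⟩
    · exact (hφ.mono inter_subset_left).sub (hw.1.mono inter_subset_right)
    · rw [lap_sub (hV'.inter Metric.isOpen_ball) (hφ.mono inter_subset_left)
        (hw.1.mono inter_subset_right) hx, hlφ x hx.1, hw.2 x hx.2, sub_zero]
    · rw [abs_sub_comm]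
      convert hwK x hx using 2
      ring
  obtain ⟨u₀, hu₀⟩ := hloc 0
  choose! nxt hnextQ hnext using hstep
  let s : ℕ → Eu n → ℝ := fun m => Nat.rec u₀ nxt m
  have hs : ∀ m, Q m (s m) := by
    intro m
    induction m with
    | zero => exact hu₀
    | succ m ih => exact hnextQ m _ ih
  have hd : ∀ m, ∀ x ∈ K m, |s m x - s (m + 1) x| ≤ (1 / 2) ^ m := fun m => hnext m _ (hs m)
  -- the limit exists at the points of `U`; elsewhere its value is irrelevant
  let u : Eu n → ℝ := fun x => limUnder atTop fun j => s j x
  have hgeo : ∀ m, ∀ x ∈ K m, ∀ j, dist (s (j + m) x) (s (j + 1 + m) x) ≤ 1 * (1 / 2) ^ j := by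
    intro m x hx j
    rw [one_mul, Real.dist_eq, add_right_comm]
    refine (hd (j + m) x (hKm (Nat.le_add_left m j) hx)).trans ?_
    exact pow_le_pow_of_le_one (by norm_num) (by norm_num) (Nat.le_add_right j m)
  have hlim : ∀ m, ∀ x ∈ K m, Tendsto (fun j => s (j + m) x) atTop (𝓝 (u x)) := by
    intro m x hx
    obtain ⟨a, ha⟩ := cauchySeq_tendsto_of_complete
      (cauchySeq_of_le_geometric (1 / 2) 1 (by norm_num) (hgeo m x hx))
    have ha' : Tendsto (fun j => s j x) atTop (𝓝 a) := (tendsto_add_atTop_iff_nat m).1 ha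
    have : u x = a := ha'.limUnder_eq
    rwa [this]
  have hunif : ∀ m, TendstoUniformlyOn (fun j x => s (j + m) x) u atTop (K m) := by
    intro m
    rw [Metric.tendstoUniformlyOn_iff]
    intro ε hε
    have ht : Tendsto (fun j : ℕ => 1 * (1 / 2 : ℝ) ^ j / (1 - 1 / 2)) atTop (𝓝 0) := by
      have := ((tendsto_pow_atTop_nhds_zero_of_lt_one (r := (1 / 2 : ℝ)) (by norm_num)
        (by norm_num)).const_mul 1).div_const (1 - 1 / 2)
      simpa using this
    filter_upwards [ht.eventually (gt_mem_nhds hε)] with j hj x hx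
    rw [dist_comm]
    exact (dist_le_of_le_geometric_of_tendsto (1 / 2) 1 (by norm_num) (hgeo m x hx)
      (hlim m x hx) j).trans_lt hj
  have hfin : ∀ m, ContDiffOn ℝ ∞ u (interior (K m)) ∧ ∀ x ∈ interior (K m), lap u x = f x := by
    intro m
    have hsm : ∀ j, ContDiffOn ℝ ∞ (s (j + m)) (interior (K m)) ∧
        ∀ x ∈ interior (K m), lap (s (j + m)) x = f x := by
      intro j
      obtain ⟨V, -, hKV, h1, h2⟩ := hs (j + m)
      have : interior (K m) ⊆ V :=
        interior_subset.trans ((hKm (Nat.le_add_left m j)).trans hKV)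
      exact ⟨h1.mono this, fun x hx => h2 x (this hx)⟩
    obtain ⟨hm, hlm⟩ := hsm 0
    rw [zero_add] at hm hlm
    have hharm : HarmOn (fun x => u x - s m x) (interior (K m)) := by
      refine harmOn_of_tendstoUniformlyOn hn isOpen_interior
        (u := fun j x => s (j + m) x - s m x) (Eventually.of_forall fun j => ?_) ?_
      · refine ⟨(hsm j).1.sub hm, fun x hx => ?_⟩
        rw [lap_sub isOpen_interior (hsm j).1 hm hx, (hsm j).2 x hx, hlm x hx, sub_self]
      · have := (hunif m).mono interior_subset
        rw [Metric.tendstoUniformlyOn_iff] at this ⊢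
        simpa only [dist_sub_right] using this
    have hu : u = fun x => 1 * (u x - s m x) + 1 * s m x := by ext; ring
    constructor
    · exact (hharm.1.add hm).congr fun x _ => by simp
    · intro x hx
      rw [hu, lap_lin isOpen_interior hharm.1 hm hx, hharm.2 x hx, hlm x hx]
      ring
  refine ⟨u, fun x hx => ?_, fun x hx => ?_⟩
  · obtain ⟨m, hm⟩ := hKi x hx
    exact ((hfin m).1.contDiffAt (isOpen_interior.mem_nhds hm)).contDiffWithinAt
  · obtain ⟨m, hm⟩ := hKi x hx
    exact (hfin m).2 x hm

end Poisson

/-! ### The homotopy formula for 2-forms -/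

section Homotopy
variable {n : ℕ}

/-- Differentiation under the integral sign over `[0, 1]` for a jointly `C¹` integrand. -/
lemma hasFDerivAt_param {E F : Type} [NormedAddCommGroup E] [NormedSpace ℝ E]
    [FiniteDimensional ℝ E] [NormedAddCommGroup F] [NormedSpace ℝ F] {G : ℝ × E → F}
    (hG : ContDiff ℝ 1 G) (x₀ : E) :
    HasFDerivAt (fun x => ∫ t in (0 : ℝ)..1, G (t, x))
      (∫ t in (0 : ℝ)..1, (fderiv ℝ G (t, x₀)).comp (ContinuousLinearMap.inr ℝ ℝ E)) x₀ := by
  have : ProperSpace E := FiniteDimensional.proper ℝ E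
  have hG' : Continuous fun p : ℝ × E => (fderiv ℝ G p).comp (ContinuousLinearMap.inr ℝ ℝ E) :=
    (hG.continuous_fderiv (by norm_num)).clm_comp continuous_const
  obtain ⟨C, hC⟩ := (isCompact_Icc (a := (0 : ℝ)) (b := 1)).prod
    (isCompact_closedBall x₀ 1) |>.exists_bound_of_continuousOn hG'.continuousOn
  have hslice : ∀ x : E, Continuous fun t : ℝ => (t, x) := fun x => continuous_id.prodMk continuous_const
  refine intervalIntegral.hasFDerivAt_integral_of_dominated_of_fderiv_le
    (F := fun x t => G (t, x))
    (F' := fun x t => (fderiv ℝ G (t, x)).comp (ContinuousLinearMap.inr ℝ ℝ E))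
    (bound := fun _ => C) (Metric.closedBall_mem_nhds x₀ one_pos)
    (Eventually.of_forall fun x => (hG.continuous.comp (hslice x)).aestronglyMeasurable)
    ((hG.continuous.comp (hslice x₀)).intervalIntegrable _ _)
    (hG'.comp (hslice x₀)).aestronglyMeasurable
    (Eventually.of_forall fun t ht x hx => hC (t, x) ⟨?_, hx⟩)
    intervalIntegrable_const (Eventually.of_forall fun t _ x _ => ?_)
  · rw [uIoc_of_le zero_le_one] at ht
    exact ⟨ht.1.le, ht.2⟩
  · exact (hG.differentiable (by norm_num) (t, x)).hasFDerivAt.comp x (hasFDerivAt_prodMk_right t x)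

lemma contDiff_param_nat {E : Type} [NormedAddCommGroup E] [NormedSpace ℝ E]
    [FiniteDimensional ℝ E] (k : ℕ) : ∀ {F : Type} [NormedAddCommGroup F] [NormedSpace ℝ F]
    {G : ℝ × E → F}, ContDiff ℝ ∞ G → ContDiff ℝ k (fun x => ∫ t in (0 : ℝ)..1, G (t, x)) := by
  induction k with
  | zero =>
    intro F _ _ G hG
    exact contDiff_zero.2 (continuous_iff_continuousAt.2 fun x =>
      (hasFDerivAt_param (hG.of_le (by norm_cast)) x).continuousAt)
  | succ k ih =>
    intro F _ _ G hG
    have h1 : ContDiff ℝ 1 G := hG.of_le (by norm_cast)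
    rw [show ((k + 1 : ℕ) : WithTop ℕ∞) = (k : WithTop ℕ∞) + 1 by norm_cast,
      contDiff_succ_iff_hasFDerivAt]
    refine ⟨_, ?_, hasFDerivAt_param h1⟩
    refine ih (G := fun p => (fderiv ℝ G p).comp (ContinuousLinearMap.inr ℝ ℝ E)) ?_
    exact (hG.fderiv_right (m := ∞) (by norm_cast)).clm_comp contDiff_const

lemma contDiff_param {E F : Type} [NormedAddCommGroup E] [NormedSpace ℝ E]
    [FiniteDimensional ℝ E] [NormedAddCommGroup F] [NormedSpace ℝ F]
    {G : ℝ × E → F} (hG : ContDiff ℝ ∞ G) :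
    ContDiff ℝ ∞ (fun x => ∫ t in (0 : ℝ)..1, G (t, x)) :=
  contDiff_infty.2 fun k => contDiff_param_nat k hG

/-- The `j`-th component of the radial-gauge potential of the 2-tensor field `f`:
`∫₀¹ t * ∑ i, f i j (c + t (x - c)) * (x i - c i) dt`, the contraction with the Euler field based at
`c` integrated along the segment from `c` to `x`. -/
noncomputable def pot (f : Fin n → Fin n → Eu n → ℝ) (c : Eu n) (j : Fin n) (x : Eu n) : ℝ :=
  ∫ t in (0 : ℝ)..1, t * ∑ i, f i j (c + t • (x - c)) * (x i - c i)

variable {f : Fin n → Fin n → Eu n → ℝ}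

lemma contDiff_coord (i : Fin n) : ContDiff ℝ ∞ fun x : Eu n => x i :=
  (EuclideanSpace.proj i : Eu n →L[ℝ] ℝ).contDiff

lemma contDiff_pot_integrand (hf : ∀ i j, ContDiff ℝ ∞ (f i j)) (c : Eu n) (j : Fin n) :
    ContDiff ℝ ∞ fun p : ℝ × Eu n =>
      p.1 * ∑ i, f i j (c + p.1 • (p.2 - c)) * (p.2 i - c i) := by
  refine contDiff_fst.mul (ContDiff.sum fun i _ => ((hf i j).comp ?_).mul ?_)
  · fun_prop
  · exact ((contDiff_coord i).comp contDiff_snd).sub contDiff_const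

lemma contDiff_pot (hf : ∀ i j, ContDiff ℝ ∞ (f i j)) (c : Eu n) (j : Fin n) :
    ContDiff ℝ ∞ (pot f c j) :=
  contDiff_param (contDiff_pot_integrand hf c j)

lemma hasFDerivAt_comp_homothety {g : Eu n → ℝ} (hg : ContDiff ℝ ∞ g) (c x : Eu n) (t : ℝ) :
    HasFDerivAt (fun x => g (c + t • (x - c))) (t • fderiv ℝ g (c + t • (x - c))) x := by
  have h1 : HasFDerivAt (fun x : Eu n => c + t • (x - c)) (t • ContinuousLinearMap.id ℝ (Eu n)) x :=
    (((hasFDerivAt_id x).sub_const c).const_smul t).const_add c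
  refine ((hg.differentiable (by norm_cast) _).hasFDerivAt.comp x h1).congr_fderiv ?_
  ext v
  simp

lemma pd_pot (hf : ∀ i j, ContDiff ℝ ∞ (f i j)) (c : Eu n) (j k : Fin n) (x : Eu n) :
    pd (pot f c j) (e k) x = ∫ t in (0 : ℝ)..1,
      t * (∑ i, t * pd (f i j) (e k) (c + t • (x - c)) * (x i - c i)
        + f k j (c + t • (x - c))) := by
  have hG := contDiff_pot_integrand hf c j
  have h1 := hasFDerivAt_param (hG.of_le (m := 1) (by norm_cast)) x
  have hint : IntervalIntegrable (fun t : ℝ => (fderiv ℝ (fun p : ℝ × Eu n =>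
      p.1 * ∑ i, f i j (c + p.1 • (p.2 - c)) * (p.2 i - c i)) (t, x)).comp
        (ContinuousLinearMap.inr ℝ ℝ (Eu n))) volume 0 1 := by
    refine Continuous.intervalIntegrable ?_ _ _
    exact ((hG.continuous_fderiv (by norm_cast)).comp (by fun_prop)).clm_comp continuous_const
  rw [pd, show pot f c j = fun x => ∫ t in (0 : ℝ)..1,
    t * ∑ i, f i j (c + t • (x - c)) * (x i - c i) from rfl, h1.fderiv,
    ContinuousLinearMap.intervalIntegral_apply hint]
  refine intervalIntegral.integral_congr fun t _ => ?_
  have h2 := (hG.differentiable (by norm_cast) (t, x)).hasFDerivAt.comp x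
    (hasFDerivAt_prodMk_right t x)
  have h3 : ∀ i, HasFDerivAt (fun x : Eu n => f i j (c + t • (x - c)) * (x i - c i)) _ x :=
    fun i => (hasFDerivAt_comp_homothety (hf i j) c x t).fun_mul
      (((EuclideanSpace.proj i : Eu n →L[ℝ] ℝ).hasFDerivAt (x := x)).sub_const (c i))
  have h4 := (HasFDerivAt.fun_sum (u := Finset.univ) fun i _ => h3 i).const_mul t
  have h5 := h2.unique h4
  simp only [h5]
  have h6 : ∀ i, (EuclideanSpace.proj i : Eu n →L[ℝ] ℝ) (e k) = if i = k then 1 else 0 := by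
    intro i
    simp
  simp only [smul_apply, sum_apply, add_apply, smul_eq_mul, Finset.sum_add_distrib, h6, pd]
  congr 1
  rw [add_comm]
  congr 1
  · exact Finset.sum_congr rfl fun i _ => by ring
  · simp

lemma clm_apply_eq_sum (L : Eu n →L[ℝ] ℝ) (v : Eu n) : L v = ∑ i, L (e i) * v i := by
  conv_lhs => rw [← (EuclideanSpace.basisFun (Fin n) ℝ).sum_repr v]
  rw [map_sum]
  refine Finset.sum_congr rfl fun i _ => ?_
  simp [mul_comm]

/-- The homotopy formula: if `f` is antisymmetric and closed along the segment from `c` to `x`, the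
curl of its radial-gauge potential at `x` is `f x`, being the integral of the derivative of
`t ^ 2 * f (c + t (x - c))`. -/
lemma curl_pot (hf : ∀ i j, ContDiff ℝ ∞ (f i j)) (c x : Eu n) (j k : Fin n)
    (hanti : ∀ t ∈ Icc (0 : ℝ) 1, f j k (c + t • (x - c)) = - f k j (c + t • (x - c)))
    (hcl : ∀ t ∈ Icc (0 : ℝ) 1, ∀ i, pd (f i j) (e k) (c + t • (x - c))
      - pd (f i k) (e j) (c + t • (x - c)) = pd (f k j) (e i) (c + t • (x - c))) :
    pd (pot f c j) (e k) x - pd (pot f c k) (e j) x = f k j x := by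
  have hcont : ∀ g : Eu n → ℝ, ContDiff ℝ ∞ g → Continuous fun t : ℝ => g (c + t • (x - c)) :=
    fun g hg => hg.continuous.comp (by fun_prop)
  have hcont' : ∀ j k, Continuous fun t : ℝ =>
      t * (∑ i, t * pd (f i j) (e k) (c + t • (x - c)) * (x i - c i)
        + f k j (c + t • (x - c))) := by
    intro j k
    refine continuous_id.mul (Continuous.add (continuous_finsetSum _ fun i _ => ?_)
      (hcont _ (hf k j)))
    exact (continuous_id.mul (hcont _ (pd_contDiff (hf i j) _))).mul continuous_const
  have hder : ∀ t : ℝ, HasDerivAt (fun t : ℝ => t ^ 2 * f k j (c + t • (x - c)))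
      (2 * t * f k j (c + t • (x - c))
        + t ^ 2 * ∑ i, pd (f k j) (e i) (c + t • (x - c)) * (x i - c i)) t := by
    intro t
    have h1 : HasDerivAt (fun t : ℝ => c + t • (x - c)) (x - c) t := by
      simpa using ((hasDerivAt_id t).smul_const (x - c)).const_add c
    have h2 := ((hf k j).differentiable (by norm_cast) (c + t • (x - c))).hasFDerivAt.comp_hasDerivAt
      t h1
    have h3 : fderiv ℝ (f k j) (c + t • (x - c)) (x - c)
        = ∑ i, pd (f k j) (e i) (c + t • (x - c)) * (x i - c i) :=
      clm_apply_eq_sum _ _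
    rw [h3] at h2
    refine ((hasDerivAt_pow 2 t).fun_mul h2).congr_deriv ?_
    simp
  have hcd : Continuous fun t : ℝ => 2 * t * f k j (c + t • (x - c))
        + t ^ 2 * ∑ i, pd (f k j) (e i) (c + t • (x - c)) * (x i - c i) := by
    refine ((continuous_const.mul continuous_id).mul (hcont _ (hf k j))).add
      ((continuous_pow 2).mul (continuous_finsetSum _ fun i _ => ?_))
    exact (hcont _ (pd_contDiff (hf k j) _)).mul continuous_const
  have hftc := intervalIntegral.integral_eq_sub_of_hasDerivAt (a := 0) (b := 1)
    (fun t _ => hder t) (hcd.intervalIntegrable _ _)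
  rw [pd_pot hf, pd_pot hf, ← intervalIntegral.integral_sub ((hcont' j k).intervalIntegrable _ _)
    ((hcont' k j).intervalIntegrable _ _)]
  have : f k j x = ∫ t in (0 : ℝ)..1, (2 * t * f k j (c + t • (x - c))
        + t ^ 2 * ∑ i, pd (f k j) (e i) (c + t • (x - c)) * (x i - c i)) := by
    rw [hftc]; simp
  rw [this]
  refine intervalIntegral.integral_congr fun t ht => ?_
  rw [uIcc_of_le zero_le_one] at ht
  simp only [hanti t ht, ← hcl t ht, Finset.mul_sum, sub_mul, mul_sub, Finset.sum_sub_distrib,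
    mul_add]
  have hs : ∀ j k, ∑ i, t * (t * pd (f i j) (e k) (c + t • (x - c)) * (x i - c i))
      = ∑ i, t ^ 2 * (pd (f i j) (e k) (c + t • (x - c)) * (x i - c i)) :=
    fun j k => Finset.sum_congr rfl fun i _ => by ring
  simp only [mul_sub, Finset.sum_sub_distrib] at hs
  simp only [hs]
  ring

end Homotopy

/-! ### Closed 2-forms on star-shaped open sets -/

section Potential
variable {n : ℕ}

/-- The Poincaré lemma for 2-forms on an open star-shaped set. Near a given point only the values of
`f` on a neighbourhood of a segment matter, so that a cutoff reduces to a globally smooth field. -/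
theorem exists_potential {U : Set (Eu n)} (hU : IsOpen U) {c : Eu n} (hst : StarConvex ℝ c U)
    {f : Fin n → Fin n → Eu n → ℝ} (hf : ∀ i j, ContDiffOn ℝ ∞ (f i j) U)
    (hanti : ∀ x ∈ U, ∀ i j, f i j x = - f j i x)
    (hcl : ∀ x ∈ U, ∀ i j k,
      pd (f i j) (e k) x + pd (f j k) (e i) x + pd (f k i) (e j) x = 0) :
    ∃ A : Fin n → Eu n → ℝ, (∀ j, ContDiffOn ℝ ∞ (A j) U) ∧
      ∀ x ∈ U, ∀ i j, f i j x = pd (A j) (e i) x - pd (A i) (e j) x := by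
  refine ⟨pot f c, ?_⟩
  have key : ∀ x ∈ U, (∀ j, ContDiffAt ℝ ∞ (pot f c j) x) ∧
      ∀ i j, f i j x = pd (pot f c j) (e i) x - pd (pot f c i) (e j) x := by
    intro x hx
    have hseg : ∀ t ∈ Icc (0 : ℝ) 1, c + t • (x - c) ∈ U :=
      fun t ht => hst.add_smul_sub_mem hx ht.1 ht.2
    have hK : IsCompact ((fun t : ℝ => c + t • (x - c)) '' Icc 0 1) :=
      isCompact_Icc.image (by fun_prop)
    obtain ⟨χ, χs, -, χU, W, hW, hKW, hWU, hW1⟩ :=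
      exists_cutoff hK hU (by rintro _ ⟨t, ht, rfl⟩; exact hseg t ht)
    have hsegW : ∀ t ∈ Icc (0 : ℝ) 1, c + t • (x - c) ∈ W := fun t ht => hKW ⟨t, ht, rfl⟩
    let g : Fin n → Fin n → Eu n → ℝ := fun i j y => χ y * f i j y
    have hg : ∀ i j, ContDiff ℝ ∞ (g i j) := fun i j => contDiff_cutoff hU χs χU (hf i j)
    have hgf : ∀ i j, ∀ y ∈ W, g i j y = f i j y := fun i j y hy => by simp [g, hW1 y hy]
    have hgf' : ∀ i j, ∀ y ∈ W, ∀ v, pd (g i j) v y = pd (f i j) v y := by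
      intro i j y hy v
      refine (pd_congr ?_ v).eq_of_nhds
      filter_upwards [hW.mem_nhds hy] with z hz using hgf i j z hz
    have hnear : ∀ᶠ y in 𝓝 x, ∀ t ∈ Icc (0 : ℝ) 1, c + t • (y - c) ∈ W := by
      refine isCompact_Icc.eventually_forall_of_forall_eventually fun t ht => ?_
      have hc : Continuous fun p : Eu n × ℝ => c + p.2 • (p.1 - c) := by fun_prop
      exact hc.continuousAt.eventually (hW.mem_nhds (hsegW t ht))
    have hpot : ∀ j, pot f c j =ᶠ[𝓝 x] pot g c j := by
      intro j
      filter_upwards [hnear] with y hy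
      refine intervalIntegral.integral_congr fun t ht => ?_
      rw [uIcc_of_le zero_le_one] at ht
      simp only [hgf _ _ _ (hy t ht)]
    refine ⟨fun j => (contDiff_pot hg c j).contDiffAt.congr_of_eventuallyEq (hpot j),
      fun i j => ?_⟩
    have hxW : x ∈ W := by simpa using hsegW 1 (by simp)
    rw [(pd_congr (hpot j) _).eq_of_nhds, (pd_congr (hpot i) _).eq_of_nhds, ← hgf i j x hxW]
    refine (curl_pot hg c x j i (fun t ht => ?_) fun t ht m => ?_).symm
    · have := hsegW t ht
      rw [hgf _ _ _ this, hgf _ _ _ this, hanti _ (hWU this)]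
    · have hy := hsegW t ht
      have h1 := hcl _ (hWU hy) m j i
      have hneg : ∀ i j v, pd (f i j) v (c + t • (x - c)) = - pd (f j i) v (c + t • (x - c)) := by
        intro i j v
        have : f i j =ᶠ[𝓝 (c + t • (x - c))] fun y => - f j i y := by
          filter_upwards [hU.mem_nhds (hWU hy)] with z hz using hanti z hz i j
        rw [(pd_congr this v).eq_of_nhds]
        simp only [pd, fderiv_fun_neg, neg_apply]
      rw [hgf' _ _ _ hy, hgf' _ _ _ hy, hgf' _ _ _ hy]
      rw [hneg i m, hneg j i] at h1
      linarith
  exact ⟨fun j x hx => ((key x hx).1 j).contDiffWithinAt, fun x hx => (key x hx).2⟩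

lemma pd_comm {U : Set (Eu n)} (hU : IsOpen U) {u : Eu n → ℝ} (hu : ContDiffOn ℝ ∞ u U) {x : Eu n}
    (hx : x ∈ U) (v w : Eu n) : pd (pd u v) w x = pd (pd u w) v x := by
  have hd : DifferentiableAt ℝ (fderiv ℝ u) x :=
    ((hu.fderiv_of_isOpen hU (m := ∞) (by norm_cast)).contDiffAt
      (hU.mem_nhds hx)).differentiableAt (by norm_cast)
  have h : ∀ v w, pd (pd u v) w x = fderiv ℝ (fderiv ℝ u) x w v := by
    intro v w
    have := hd.hasFDerivAt.clm_apply (hasFDerivAt_const v x)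
    rw [pd, show pd u v = fun y => fderiv ℝ u y v from rfl, this.fderiv]
    simp
  rw [h, h]
  exact ((hu.contDiffAt (hU.mem_nhds hx)).isSymmSndFDerivAt
    (by simp only [minSmoothness_of_isRCLikeNormedField]; norm_cast)) w v

end Potential

end StrongPoincare

/-- **Strong Poincaré lemma for 2-forms.** On an open star-shaped subset `U` of `ℝⁿ`,
a smooth closed antisymmetric 2-tensor field has a smooth divergence-free vector
potential (the Coulomb/Lorenz gauge is always attainable locally). -/
theorem strong_poincare_lemma_two_forms (n : ℕ) (hn : 2 ≤ n)
    (U : Set (EuclideanSpace ℝ (Fin n))) (hU : IsOpen U)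
    (c : EuclideanSpace ℝ (Fin n)) (hc : c ∈ U) (hstar : StarConvex ℝ c U)
    (F : EuclideanSpace ℝ (Fin n) → Fin n → Fin n → ℝ)
    (hF : ContDiffOn ℝ (⊤ : ℕ∞) F U)
    (hanti : ∀ x ∈ U, ∀ i j : Fin n, F x i j = - F x j i)
    (hclosed : ∀ x ∈ U, ∀ i j k : Fin n,
      pd (fun y => F y i j) (EuclideanSpace.single k 1) x
        + pd (fun y => F y j k) (EuclideanSpace.single i 1) x
        + pd (fun y => F y k i) (EuclideanSpace.single j 1) x = 0) :
    ∃ A : EuclideanSpace ℝ (Fin n) → EuclideanSpace ℝ (Fin n), ContDiffOn ℝ (⊤ : ℕ∞) A U ∧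
      (∀ x ∈ U, ∀ i j : Fin n,
        F x i j = pd (fun y => A y j) (EuclideanSpace.single i 1) x
          - pd (fun y => A y i) (EuclideanSpace.single j 1) x) ∧
      (∀ x ∈ U, ∑ i : Fin n, pd (fun y => A y i) (EuclideanSpace.single i 1) x = 0) := by
  obtain ⟨A, hA, hcurl⟩ := StrongPoincare.exists_potential hU hstar (f := fun i j y => F y i j)
    (fun i j => contDiffOn_pi.1 (contDiffOn_pi.1 hF i) j) hanti hclosed
  obtain ⟨u, hu, hlap⟩ := StrongPoincare.poisson hn hU hc hstar
    (f := fun x => ∑ i, - pd (A i) (EuclideanSpace.single i 1) x)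
    (ContDiffOn.sum fun i _ => (StrongPoincare.pd_contDiffOn hU (hA i) _).neg)
  have hadd : ∀ x ∈ U, ∀ i v,
      pd (fun y => A i y + pd u (EuclideanSpace.single i 1) y) v x =
        pd (A i) v x + pd (pd u (EuclideanSpace.single i 1)) v x := fun x hx i v =>
    StrongPoincare.pd_add (StrongPoincare.diffAt hU (hA i) hx)
      (StrongPoincare.diffAt hU (StrongPoincare.pd_contDiffOn hU hu _) hx)
  refine ⟨fun x => WithLp.toLp 2 fun i => A i x + pd u (EuclideanSpace.single i 1) x, ?_,
    fun x hx i j => ?_, fun x hx => ?_⟩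
  · exact contDiffOn_euclidean.2 fun i => (hA i).add (StrongPoincare.pd_contDiffOn hU hu _)
  · change _ = pd (fun y => A j y + pd u (EuclideanSpace.single j 1) y) _ x
      - pd (fun y => A i y + pd u (EuclideanSpace.single i 1) y) _ x
    rw [hadd x hx, hadd x hx, hcurl x hx i j, StrongPoincare.pd_comm hU hu hx
      (EuclideanSpace.single i 1) (EuclideanSpace.single j 1)]
    ring
  · change ∑ i, pd (fun y => A i y + pd u (EuclideanSpace.single i 1) y) _ x = 0
    have := hlap x hx
    rw [StrongPoincare.lap, Finset.sum_neg_distrib] at this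
    simp only [hadd x hx, Finset.sum_add_distrib]
    rw [this, add_neg_cancel]
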